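/- Let n ≥ 7 and let u : ℝⁿ \ {0} → ℝ be a smooth homogeneous solution of (−Δ)³u = |u|^{p−1}u on ℝⁿ \ {0}, i.e. u(x) = |x|^{−6/(p−1)} u(x/|x|) for all x ≠ 0, which is stable in ℝⁿ \ {0}: for every smooth φ compactly supported in ℝⁿ \ {0}, ∫ ‖∇(Δφ)‖² dx ≥ p ∫ |u|^{p−1} φ² dx. If (n+6)/(n−6) < p and, in the case n ≥ 15, additionally p < p_c(n), then u is identically zero. -/

import Mathlib

open MeasureTheory Filter

noncomputable section

/-- The Euclidean Laplacian of `u` at `x`. -/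
def laplacian {n : ℕ} (u : EuclideanSpace ℝ (Fin n) → ℝ) (x : EuclideanSpace ℝ (Fin n)) : ℝ :=
  ∑ i : Fin n, iteratedFDeriv ℝ 2 u x ![EuclideanSpace.single i 1, EuclideanSpace.single i 1]

def dd1 (n : ℝ) : ℝ :=
  -108*n^6 + 1296*n^5 - 3024*n^4 - 10368*n^3 + 103104*n^2 + 20736*n - 94976

def dd2 (n : ℝ) : ℝ :=
  9*n^12 - 216*n^11 + 1800*n^10 - 4320*n^9 - 30864*n^8 + 251136*n^7 - 690432*n^6
    - 1936384*n^5 + 6915840*n^4 + 4818944*n^3 - 16644096*n^2 - 3039232*n + 6131712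

/-- `d₀(n)`, the real cube root of `-(d₁(n) + 36√(d₂(n)))`. -/
def dd0 (n : ℝ) : ℝ := (-(dd1 n + 36 * Real.sqrt (dd2 n))) ^ ((1 : ℝ)/3)

def dfn (n : ℝ) : ℝ :=
  (1/6) * Real.sqrt (9*n^2 + 96 - (1536 + 1152*n^2) / dd0 n - (3/2) * dd0 n)

/-- The Joseph–Lundgren exponent `p_c(n)` (for `n ≥ 15`; `p_c(n) = +∞` for `n ≤ 14`,
which is encoded by imposing the bound `p < pc n` only when `15 ≤ n`). -/
def pc (n : ℝ) : ℝ := (n + 4 - 2 * dfn n) / (n - 8 - 2 * dfn n)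

/-- Log-radius. -/
def lr {n : ℕ} (x : EuclideanSpace ℝ (Fin n)) : ℝ := Real.log ‖x‖

/-- Spherical integral. -/
def Ms {n : ℕ} (f : EuclideanSpace ℝ (Fin n) → ℝ) : ℝ :=
  ∫ θ : Metric.sphere (0 : EuclideanSpace ℝ (Fin n)) 1, f θ
    ∂((volume : Measure (EuclideanSpace ℝ (Fin n))).toSphere)

lemma exp_cov (K : ℝ → ℝ) :
    ∫ r in Set.Ioi (0 : ℝ), r⁻¹ * K (Real.log r) = ∫ t, K t := by
  have h := integral_image_eq_integral_abs_deriv_smul (s := Set.univ) (f := Real.exp)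
    (f' := Real.exp) MeasurableSet.univ (fun x _ => (Real.hasDerivAt_exp x).hasDerivWithinAt)
    (Real.exp_injective.injOn) (fun r => r⁻¹ * K (Real.log r))
  rw [Set.image_univ, Real.range_exp, Measure.restrict_univ] at h
  rw [h]
  congr 1
  ext t
  rw [Real.log_exp, abs_of_pos (Real.exp_pos t), smul_eq_mul, ← mul_assoc,
    mul_inv_cancel₀ (Real.exp_pos t).ne', one_mul]

lemma polar {n : ℕ} (hn : 0 < n) (f : EuclideanSpace ℝ (Fin n) → ℝ)
    (hf : ∀ c : ℝ, 0 < c → ∀ x, f (c • x) = f x) (K : ℝ → ℝ) :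
    ∫ x, f x * (Real.exp (-(n * lr x)) * K (lr x)) = Ms f * ∫ t, K t := by
  have : Nonempty (Fin n) := ⟨⟨0, hn⟩⟩
  have hdim : Module.finrank ℝ (EuclideanSpace ℝ (Fin n)) = n := by simp
  let F : EuclideanSpace ℝ (Fin n) → ℝ := fun x => f x * (Real.exp (-(n * lr x)) * K (lr x))
  let g : ℝ → ℝ := fun r => Real.exp (-(n * Real.log r)) * K (Real.log r)
  calc
    ∫ x, F x = ∫ x : ({(0)}ᶜ : Set (EuclideanSpace ℝ (Fin n))), F x ∂(volume.comap Subtype.val) := by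
      rw [integral_subtype_comap (measurableSet_singleton _).compl F, restrict_compl_singleton]
    _ = ∫ z, f z.1 * g z.2 ∂(volume : Measure (EuclideanSpace ℝ (Fin n))).toSphere.prod
          (.volumeIoiPow (Module.finrank ℝ (EuclideanSpace ℝ (Fin n)) - 1)) := by
      rw [← (volume : Measure (EuclideanSpace ℝ (Fin n))).measurePreserving_homeomorphUnitSphereProd.integral_comp
        (Homeomorph.measurableEmbedding _)]
      congr 1
      ext x
      have hx : (x : EuclideanSpace ℝ (Fin n)) ≠ 0 := x.2
      simp only [F, g, lr, homeomorphUnitSphereProd_apply_snd_coe,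
        homeomorphUnitSphereProd_apply_fst_coe]
      rw [hf _ (inv_pos.2 (norm_pos_iff.2 hx))]
    _ = Ms f * ∫ r : Set.Ioi (0:ℝ), g r ∂(.volumeIoiPow (Module.finrank ℝ (EuclideanSpace ℝ (Fin n)) - 1)) := by
      rw [integral_prod_mul (f := fun z : Metric.sphere (0 : EuclideanSpace ℝ (Fin n)) 1 => f z) (g := fun r : Set.Ioi (0:ℝ) => g r)]
      rfl
    _ = _ := by
      congr 1
      rw [← exp_cov, hdim]
      simp only [Measure.volumeIoiPow, ENNReal.ofReal]
      rw [integral_withDensity_eq_integral_smul,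
        integral_subtype_comap measurableSet_Ioi fun a ↦ Real.toNNReal (a ^ (n - 1)) • g a,
        setIntegral_congr_fun measurableSet_Ioi fun x hx ↦ ?_]
      · have hx' : 0 < x := hx
        simp only [g]
        rw [NNReal.smul_def, Real.coe_toNNReal _ (pow_nonneg hx'.le _), smul_eq_mul, ← mul_assoc,
          Real.exp_neg, mul_comm (n:ℝ), Real.exp_mul, Real.exp_log hx', Real.rpow_natCast]
        congr 1
        obtain ⟨m, rfl⟩ : ∃ m, n = m + 1 := ⟨n - 1, by omega⟩
        simp only [Nat.add_sub_cancel]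
        field_simp
        ring
      · exact (measurable_subtype_coe.pow_const _).real_toNNReal

/-- Partial derivative. -/
def pd {n : ℕ} (i : Fin n) (f : EuclideanSpace ℝ (Fin n) → ℝ) (x : EuclideanSpace ℝ (Fin n)) : ℝ :=
  fderiv ℝ f x (EuclideanSpace.single i 1)

/-- Smooth off the origin. -/
def Sm {n : ℕ} (f : EuclideanSpace ℝ (Fin n) → ℝ) : Prop :=
  ∀ x, x ≠ 0 → ContDiffAt ℝ (⊤ : ℕ∞) f x

/-- Smooth off the origin and positively homogeneous of degree zero. -/
structure Good {n : ℕ} (f : EuclideanSpace ℝ (Fin n) → ℝ) : Prop where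
  sm : Sm f
  hom : ∀ c : ℝ, 0 < c → ∀ x, f (c • x) = f x

lemma nz_nhds {n : ℕ} {x : EuclideanSpace ℝ (Fin n)} (hx : x ≠ 0) :
    ∀ᶠ y in nhds x, y ≠ 0 := isOpen_ne.mem_nhds hx

lemma cda_pd {n : ℕ} {f : EuclideanSpace ℝ (Fin n) → ℝ} {x : EuclideanSpace ℝ (Fin n)}
    (hf : ContDiffAt ℝ (⊤ : ℕ∞) f x) (i : Fin n) : ContDiffAt ℝ (⊤ : ℕ∞) (pd i f) x := by
  have h : ContDiffAt ℝ (⊤ : ℕ∞) (fderiv ℝ f) x := hf.fderiv_right (by simp)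
  exact h.clm_apply contDiffAt_const

lemma cda_da {n : ℕ} {f : EuclideanSpace ℝ (Fin n) → ℝ} {x : EuclideanSpace ℝ (Fin n)}
    (hf : ContDiffAt ℝ (⊤ : ℕ∞) f x) : DifferentiableAt ℝ f x :=
  hf.differentiableAt (by simp)

lemma lap_eq {n : ℕ} {f : EuclideanSpace ℝ (Fin n) → ℝ} {x : EuclideanSpace ℝ (Fin n)}
    (hf : ContDiffAt ℝ (⊤ : ℕ∞) f x) : laplacian f x = ∑ i, pd i (pd i f) x := by
  unfold laplacian
  refine Finset.sum_congr rfl fun i _ => ?_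
  have h : ContDiffAt ℝ (⊤ : ℕ∞) (fderiv ℝ f) x := hf.fderiv_right (by simp)
  have hd : DifferentiableAt ℝ (fderiv ℝ f) x := h.differentiableAt (by simp)
  rw [iteratedFDeriv_two_apply]
  unfold pd
  rw [fderiv_clm_apply hd (differentiableAt_const _)]
  simp

lemma lap_congr {n : ℕ} {f g : EuclideanSpace ℝ (Fin n) → ℝ} {x : EuclideanSpace ℝ (Fin n)}
    (h : f =ᶠ[nhds x] g) : laplacian f x = laplacian g x := by
  unfold laplacian
  refine Finset.sum_congr rfl fun i _ => ?_
  rw [(h.iteratedFDeriv ℝ 2).eq_of_nhds]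

lemma pd_congr {n : ℕ} {f g : EuclideanSpace ℝ (Fin n) → ℝ} {x : EuclideanSpace ℝ (Fin n)}
    (h : f =ᶠ[nhds x] g) (i : Fin n) : pd i f x = pd i g x := by
  unfold pd; rw [h.fderiv_eq]

lemma cda_lap {n : ℕ} {f : EuclideanSpace ℝ (Fin n) → ℝ} {x : EuclideanSpace ℝ (Fin n)}
    (hf : ContDiffAt ℝ (⊤ : ℕ∞) f x) : ContDiffAt ℝ (⊤ : ℕ∞) (laplacian f) x := by
  unfold laplacian
  refine ContDiffAt.sum fun i _ => ?_
  have h : ContDiffAt ℝ (⊤ : ℕ∞) (iteratedFDeriv ℝ 2 f) x :=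
    hf.iteratedFDeriv_right (m := (⊤ : ℕ∞)) (le_of_eq rfl)
  have := (ContinuousMultilinearMap.apply ℝ (fun _ : Fin 2 => EuclideanSpace ℝ (Fin n)) ℝ
    ![EuclideanSpace.single i 1, EuclideanSpace.single i 1]).contDiff.contDiffAt (x := iteratedFDeriv ℝ 2 f x) (n := ((⊤:ℕ∞):WithTop ℕ∞)) |>.comp x h
  exact this

lemma pd_mul {n : ℕ} {f g : EuclideanSpace ℝ (Fin n) → ℝ} {x : EuclideanSpace ℝ (Fin n)}
    (hf : DifferentiableAt ℝ f x) (hg : DifferentiableAt ℝ g x) (i : Fin n) :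
    pd i (fun y => f y * g y) x = pd i f x * g x + f x * pd i g x := by
  unfold pd
  rw [fderiv_fun_mul hf hg]
  simp; ring

lemma pd_add {n : ℕ} {f g : EuclideanSpace ℝ (Fin n) → ℝ} {x : EuclideanSpace ℝ (Fin n)}
    (hf : DifferentiableAt ℝ f x) (hg : DifferentiableAt ℝ g x) (i : Fin n) :
    pd i (fun y => f y + g y) x = pd i f x + pd i g x := by
  unfold pd
  rw [fderiv_fun_add hf hg]
  simp

lemma cda_lr {n : ℕ} {x : EuclideanSpace ℝ (Fin n)} (hx : x ≠ 0) :
    ContDiffAt ℝ (⊤ : ℕ∞) (lr : EuclideanSpace ℝ (Fin n) → ℝ) x := by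
  unfold lr
  exact (contDiffAt_norm ℝ hx).log (norm_ne_zero_iff.2 hx)

lemma cda_H {n : ℕ} {H : ℝ → ℝ} (hH : ContDiff ℝ (⊤ : ℕ∞) H) {x : EuclideanSpace ℝ (Fin n)} (hx : x ≠ 0) :
    ContDiffAt ℝ (⊤ : ℕ∞) (fun y : EuclideanSpace ℝ (Fin n) => H (lr y)) x :=
  hH.contDiffAt.comp x (cda_lr hx)

lemma pd_H {n : ℕ} {H : ℝ → ℝ} (hH : ContDiff ℝ (⊤ : ℕ∞) H) {x : EuclideanSpace ℝ (Fin n)} (hx : x ≠ 0)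
    (i : Fin n) : pd i (fun y => H (lr y)) x = deriv H (lr x) * (Real.exp (-2 * lr x) * x i) := by
  have h1 : HasFDerivAt (fun y : EuclideanSpace ℝ (Fin n) => ‖y‖^2) (2 • innerSL ℝ x) x :=
    (hasStrictFDerivAt_norm_sq x).hasFDerivAt
  have hx2 : ‖x‖^2 ≠ 0 := pow_ne_zero _ (norm_ne_zero_iff.2 hx)
  have h2 := (h1.log hx2).const_mul (1/2 : ℝ)
  have h3 : (fun y : EuclideanSpace ℝ (Fin n) => (1/2 : ℝ) * Real.log (‖y‖^2)) = lr := by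
    ext y; rw [lr, Real.log_pow]; push_cast; ring
  rw [h3] at h2
  have hd : HasDerivAt H (deriv H (lr x)) (lr x) := ((hH.differentiable (by simp)) _).hasDerivAt
  have h4 := hd.comp_hasFDerivAt x h2
  have h5 : (fun y : EuclideanSpace ℝ (Fin n) => H (lr y)) = H ∘ lr := rfl
  have h6 : Real.exp (-2 * lr x) = (‖x‖^2)⁻¹ := by
    rw [lr, neg_mul, Real.exp_neg, mul_comm, Real.exp_mul, Real.exp_log (norm_pos_iff.2 hx)]
    norm_num
  unfold pd
  rw [h5, h4.fderiv, h6]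
  simp [innerSL_apply_apply, EuclideanSpace.inner_single_right]
  left; ring



lemma exp_lr {n : ℕ} {x : EuclideanSpace ℝ (Fin n)} (hx : x ≠ 0) : Real.exp (lr x) = ‖x‖ :=
  Real.exp_log (norm_pos_iff.2 hx)

lemma exp_two_lr {n : ℕ} {x : EuclideanSpace ℝ (Fin n)} (hx : x ≠ 0) :
    Real.exp (2 * lr x) = ∑ i, x i * x i := by
  rw [two_mul, Real.exp_add, exp_lr hx, ← pow_two, EuclideanSpace.norm_sq_eq]
  refine Finset.sum_congr rfl fun i _ => ?_
  rw [Real.norm_eq_abs, sq_abs, pow_two]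

lemma euler {n : ℕ} {f : EuclideanSpace ℝ (Fin n) → ℝ} (hf : Good f)
    {x : EuclideanSpace ℝ (Fin n)} (hx : x ≠ 0) : ∑ i, pd i f x * x i = 0 := by
  have hd : HasFDerivAt f (fderiv ℝ f x) x := (cda_da (hf.sm x hx)).hasFDerivAt
  have h1 : HasDerivAt (fun c : ℝ => c • x) x 1 := by
    simpa using (hasDerivAt_id (1:ℝ)).smul_const x
  have hd' : HasFDerivAt f (fderiv ℝ f x) ((1:ℝ) • x) := by simpa using hd
  have h2 : HasDerivAt (fun c : ℝ => f (c • x)) (fderiv ℝ f x x) 1 :=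
    hd'.comp_hasDerivAt (1:ℝ) h1
  have h3 : HasDerivAt (fun c : ℝ => f (c • x)) 0 1 := by
    refine (hasDerivAt_const (1:ℝ) (f x)).congr_of_eventuallyEq ?_
    filter_upwards [lt_mem_nhds (zero_lt_one : (0:ℝ) < 1)] with c hc
    exact hf.hom c hc x
  have h4 : fderiv ℝ f x x = 0 := h2.unique h3
  rw [← h4]
  have h5 : x = ∑ i, x i • EuclideanSpace.single i (1:ℝ) := by
    ext j
    simp [Finset.sum_apply, Pi.single_apply]
  conv_rhs => rw [h5]
  rw [← h5]
  conv_rhs => enter [2]; rw [h5]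
  rw [map_sum]
  refine Finset.sum_congr rfl fun i _ => ?_
  rw [map_smul, smul_eq_mul, mul_comm]; rfl

lemma pd_coord {n : ℕ} (i : Fin n) (x : EuclideanSpace ℝ (Fin n)) :
    pd i (fun y => y i) x = 1 := by
  have : HasFDerivAt (fun y : EuclideanSpace ℝ (Fin n) => y i) (EuclideanSpace.proj i : EuclideanSpace ℝ (Fin n) →L[ℝ] ℝ) x :=
    (EuclideanSpace.proj i : EuclideanSpace ℝ (Fin n) →L[ℝ] ℝ).hasFDerivAt
  unfold pd
  rw [this.fderiv]
  simp

lemma da_coord {n : ℕ} (i : Fin n) (x : EuclideanSpace ℝ (Fin n)) :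
    DifferentiableAt ℝ (fun y : EuclideanSpace ℝ (Fin n) => y i) x :=
  (EuclideanSpace.proj i : EuclideanSpace ℝ (Fin n) →L[ℝ] ℝ).differentiableAt

/-- Spherical Laplacian. -/
def Dl {n : ℕ} (f : EuclideanSpace ℝ (Fin n) → ℝ) (x : EuclideanSpace ℝ (Fin n)) : ℝ :=
  Real.exp (2 * lr x) * laplacian f x

lemma cd_deriv {H : ℝ → ℝ} (hH : ContDiff ℝ (⊤ : ℕ∞) H) : ContDiff ℝ (⊤ : ℕ∞) (deriv H) :=
  (contDiff_infty_iff_deriv.1 hH).2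

lemma lap_mul_H {n : ℕ} {f : EuclideanSpace ℝ (Fin n) → ℝ} (hf : Good f)
    {H : ℝ → ℝ} (hH : ContDiff ℝ (⊤ : ℕ∞) H)
    {x : EuclideanSpace ℝ (Fin n)} (hx : x ≠ 0) :
    laplacian (fun y => f y * H (lr y)) x = Real.exp (-2 * lr x) *
      (Dl f x * H (lr x) + f x * (deriv (deriv H) (lr x) + (n - 2) * deriv H (lr x))) := by
  have hH' := cd_deriv hH
  set H1 : ℝ → ℝ := fun t => deriv H t * Real.exp (-2 * t) with hH1d
  have hH1 : ContDiff ℝ (⊤ : ℕ∞) H1 := hH'.mul (Real.contDiff_exp.comp (contDiff_const.mul contDiff_id))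
  have hH1' : deriv H1 (lr x) = (deriv (deriv H) (lr x) - 2 * deriv H (lr x)) * Real.exp (-2 * lr x) := by
    have h1 : HasDerivAt (deriv H) (deriv (deriv H) (lr x)) (lr x) :=
      ((hH'.differentiable (by simp)) _).hasDerivAt
    have h2 : HasDerivAt (fun t : ℝ => Real.exp (-2 * t)) (Real.exp (-2 * lr x) * (-2)) (lr x) := by
      simpa using ((hasDerivAt_id (lr x)).const_mul (-2)).exp
    have := (h1.mul h2).deriv
    rw [show H1 = (deriv H * fun t => Real.exp (-2 * t)) from rfl, this]
    ring
  have hfx := hf.sm x hx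
  rw [lap_eq (hfx.mul (cda_H hH hx))]
  have key : ∀ i, pd i (pd i fun y => f y * H (lr y)) x =
      pd i (pd i f) x * H (lr x) + 2 * H1 (lr x) * (pd i f x * x i)
        + f x * (deriv H1 (lr x) * Real.exp (-2 * lr x)) * (x i * x i) + f x * H1 (lr x) := by
    intro i
    have e1 : (pd i fun y => f y * H (lr y)) =ᶠ[nhds x]
        fun y => (pd i f y * H (lr y)) + (f y * H1 (lr y)) * y i := by
      filter_upwards [nz_nhds hx] with y hy
      rw [pd_mul (cda_da (hf.sm y hy)) (cda_da (cda_H hH hy)), pd_H hH hy]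
      simp only [hH1d]; ring
    have d1 : DifferentiableAt ℝ (pd i f) x := cda_da (cda_pd hfx i)
    have d2 := cda_da (cda_H hH hx)
    have d3 := cda_da (cda_H hH1 hx)
    rw [pd_congr e1, pd_add (d1.fun_mul d2) (((cda_da hfx).fun_mul d3).fun_mul (da_coord i x)), pd_mul d1 d2,
      pd_mul ((cda_da hfx).fun_mul d3) (da_coord i x), pd_mul (cda_da hfx) d3, pd_coord, pd_H hH hx,
      pd_H hH1 hx]
    simp only [hH1d]; ring
  simp only [key]
  rw [Finset.sum_add_distrib, Finset.sum_add_distrib, Finset.sum_add_distrib, ← Finset.sum_mul,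
    ← Finset.mul_sum, ← Finset.mul_sum, euler hf hx, ← exp_two_lr hx, ← lap_eq hfx, hH1']
  simp only [Finset.sum_const, Finset.card_univ, Fintype.card_fin, nsmul_eq_mul]
  have h0 : Real.exp (-2 * lr x) * Real.exp (2 * lr x) = 1 := by
    rw [← Real.exp_add]; simp
  simp only [Dl, hH1d]
  linear_combination (f x * ((deriv (deriv H) (lr x) - 2 * deriv H (lr x)) * Real.exp (-2 * lr x)) - laplacian f x * H (lr x)) * h0

lemma lap_exp {n : ℕ} {f : EuclideanSpace ℝ (Fin n) → ℝ} (hf : Good f)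
    {h : ℝ → ℝ} (hh : ContDiff ℝ (⊤ : ℕ∞) h) (s ε : ℝ)
    {x : EuclideanSpace ℝ (Fin n)} (hx : x ≠ 0) :
    laplacian (fun y => f y * (Real.exp (-(s * lr y)) * h (ε * lr y))) x =
      Real.exp (-((s + 2) * lr x)) *
      ((Dl f x - s * (n - 2 - s) * f x) * h (ε * lr x)
        + (n - 2 - 2 * s) * ε * f x * deriv h (ε * lr x)
        + ε ^ 2 * f x * deriv (deriv h) (ε * lr x)) := by
  have hh' := cd_deriv hh
  have hder : ∀ (g : ℝ → ℝ), ContDiff ℝ (⊤ : ℕ∞) g → ∀ t,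
      HasDerivAt (fun t => Real.exp (-(s * t)) * g (ε * t))
        (Real.exp (-(s * t)) * (ε * deriv g (ε * t) - s * g (ε * t))) t := by
    intro g hg t
    have h1 : HasDerivAt (fun t : ℝ => Real.exp (-(s * t))) (Real.exp (-(s * t)) * (-s)) t := by
      simpa using (((hasDerivAt_id t).const_mul s).neg).exp
    have h2 : HasDerivAt g (deriv g (ε * t)) (ε * t) := ((hg.differentiable (by simp)) _).hasDerivAt
    have h3 : HasDerivAt (fun t : ℝ => ε * t) ε t := by
      simpa using (hasDerivAt_id t).const_mul ε
    have := h1.mul (h2.comp t h3)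
    refine this.congr_deriv ?_
    simp only [Function.comp]; ring
  set H : ℝ → ℝ := fun t => Real.exp (-(s * t)) * h (ε * t) with hHd
  have hH : ContDiff ℝ (⊤ : ℕ∞) H :=
    (Real.contDiff_exp.comp (contDiff_const.mul contDiff_id).neg).mul
      (hh.comp (contDiff_const.mul contDiff_id))
  have hH' : deriv H = fun t => ε * (Real.exp (-(s * t)) * deriv h (ε * t)) + (-s) * H t := by
    ext t
    rw [(hder h hh t).deriv]; simp only [hHd]; ring
  have hH'' : ∀ t, deriv (deriv H) t = Real.exp (-(s * t)) *
      (ε ^ 2 * deriv (deriv h) (ε * t) - 2 * s * ε * deriv h (ε * t) + s ^ 2 * h (ε * t)) := by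
    intro t
    rw [hH']
    have := (((hder _ hh' t).const_mul ε).add ((hder h hh t).const_mul (-s))).deriv
    refine Eq.trans this ?_
    ring
  have := lap_mul_H hf hH hx
  rw [hH'', congrFun hH' (lr x)] at this
  refine Eq.trans this ?_
  simp only [hHd]
  have e : Real.exp (-((s + 2) * lr x)) = Real.exp (-2 * lr x) * Real.exp (-(s * lr x)) := by
    rw [← Real.exp_add]; congr 1; ring
  rw [e]; ring

lemma lr_smul {n : ℕ} {x : EuclideanSpace ℝ (Fin n)} (hx : x ≠ 0) {c : ℝ} (hc : 0 < c) :
    lr (c • x) = Real.log c + lr x := by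
  rw [lr, norm_smul, Real.log_mul (norm_ne_zero_iff.2 hc.ne') (norm_ne_zero_iff.2 hx),
    Real.norm_of_nonneg hc.le]; rfl

lemma pd_hom {n : ℕ} {f : EuclideanSpace ℝ (Fin n) → ℝ} (hf : Sm f) {a c : ℝ} (hc : 0 < c)
    (h : ∀ x, x ≠ 0 → a * f (c • x) = f x) (i : Fin n) :
    ∀ x, x ≠ 0 → (a * c) * pd i f (c • x) = pd i f x := by
  intro x hx
  have hcx : c • x ≠ 0 := smul_ne_zero hc.ne' hx
  have hd : HasFDerivAt f (fderiv ℝ f (c • x)) (c • x) := (cda_da (hf _ hcx)).hasFDerivAt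
  have h1 : HasFDerivAt (fun y : EuclideanSpace ℝ (Fin n) => c • y)
      (c • ContinuousLinearMap.id ℝ (EuclideanSpace ℝ (Fin n))) x := (hasFDerivAt_id x).const_smul c
  have h2 := (hd.comp x h1).const_mul a
  have h3 : f =ᶠ[nhds x] fun y => a * (f ∘ fun y => c • y) y := by
    filter_upwards [nz_nhds hx] with y hy
    exact (h y hy).symm
  unfold pd
  rw [h3.fderiv_eq, h2.fderiv]
  simp; ring

lemma Sm.pd {n : ℕ} {f : EuclideanSpace ℝ (Fin n) → ℝ} (hf : Sm f) (i : Fin n) : Sm (pd i f) :=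
  fun x hx => cda_pd (hf x hx) i

lemma Good.Dl {n : ℕ} {f : EuclideanSpace ℝ (Fin n) → ℝ} (hf : Good f) : Good (Dl f) := by
  constructor
  · intro x hx
    exact ((contDiffAt_const.mul (cda_lr hx)).exp).mul (cda_lap (hf.sm x hx))
  · intro c hc x
    by_cases hx : x = 0
    · simp [hx]
    have hcx : c • x ≠ 0 := smul_ne_zero hc.ne' hx
    unfold _root_.Dl
    rw [lap_eq (hf.sm x hx), lap_eq (hf.sm _ hcx), lr_smul hx hc, mul_add, Real.exp_add,
      mul_comm 2 (Real.log c), Real.exp_mul, Real.exp_log hc, Finset.mul_sum, Finset.mul_sum]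
    refine Finset.sum_congr rfl fun i _ => ?_
    have h1 := pd_hom hf.sm (a := 1) hc (fun x _ => by rw [one_mul, hf.hom c hc]) i
    have h2 := pd_hom (hf.sm.pd i) hc h1 i x hx
    rw [← h2]
    have : c ^ (2:ℝ) = c * c := by rw [Real.rpow_two, pow_two]
    rw [this]; ring

lemma Good.add {n : ℕ} {f g : EuclideanSpace ℝ (Fin n) → ℝ} (hf : Good f) (hg : Good g) :
    Good (fun x => f x + g x) :=
  ⟨fun x hx => (hf.sm x hx).add (hg.sm x hx), fun c hc x => by rw [hf.hom c hc, hg.hom c hc]⟩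

lemma Good.mul {n : ℕ} {f g : EuclideanSpace ℝ (Fin n) → ℝ} (hf : Good f) (hg : Good g) :
    Good (fun x => f x * g x) :=
  ⟨fun x hx => (hf.sm x hx).mul (hg.sm x hx), fun c hc x => by rw [hf.hom c hc, hg.hom c hc]⟩

lemma Good.smul {n : ℕ} {f : EuclideanSpace ℝ (Fin n) → ℝ} (hf : Good f) (a : ℝ) :
    Good (fun x => a * f x) :=
  ⟨fun x hx => contDiffAt_const.mul (hf.sm x hx), fun c hc x => by rw [hf.hom c hc]⟩



/-- Smooth functions on the line vanishing outside `[1,2]`. -/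
structure Cut (h : ℝ → ℝ) : Prop where
  cd : ContDiff ℝ (⊤ : ℕ∞) h
  lo : ∀ t, t < 1 → h t = 0
  hi : ∀ t, 2 < t → h t = 0

lemma Cut.deriv {h : ℝ → ℝ} (hh : Cut h) : Cut (deriv h) := by
  refine ⟨cd_deriv hh.cd, fun t ht => ?_, fun t ht => ?_⟩
  · have : h =ᶠ[nhds t] fun _ => 0 := by
      filter_upwards [gt_mem_nhds ht] with s hs using hh.lo s hs
    rw [this.deriv_eq]; simp
  · have : h =ᶠ[nhds t] fun _ => 0 := by
      filter_upwards [lt_mem_nhds ht] with s hs using hh.hi s hs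
    rw [this.deriv_eq]; simp

lemma Cut.iter {h : ℝ → ℝ} (hh : Cut h) (k : ℕ) : Cut (_root_.deriv^[k] h) := by
  induction k with
  | zero => exact hh
  | succ k ih => rw [Function.iterate_succ_apply']; exact ih.deriv

lemma exists_cut : ∃ h : ℝ → ℝ, Cut h ∧ (∀ t, 0 ≤ h t) ∧ 0 < (∫ t, h t) ∧ 0 < (∫ t, h t * h t) := by
  let b : ContDiffBump (3/2 : ℝ) := ⟨1/4, 1/2, by norm_num, by norm_num⟩
  have hb1 : b (3/2) = 1 := b.one_of_mem_closedBall (by simp [b])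
  refine ⟨b, ⟨b.contDiff, fun t ht => ?_, fun t ht => ?_⟩, fun t => b.nonneg, ?_, ?_⟩
  · apply b.zero_of_le_dist
    rw [Real.dist_eq, abs_sub_comm]
    exact le_trans (by show (1/2:ℝ) ≤ 3/2 - t; linarith) (le_abs_self _)
  · apply b.zero_of_le_dist
    rw [Real.dist_eq]
    exact le_trans (by show (1/2:ℝ) ≤ t - 3/2; linarith) (le_abs_self _)
  · exact b.continuous.integral_pos_of_hasCompactSupport_nonneg_nonzero b.hasCompactSupport
      (fun t => b.nonneg) (x := 3/2) (by rw [hb1]; exact one_ne_zero)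
  · exact (b.continuous.mul b.continuous).integral_pos_of_hasCompactSupport_nonneg_nonzero
      (b.hasCompactSupport.mul_left)
      (fun t => mul_self_nonneg _) (x := 3/2) (by show b (3/2) * b (3/2) ≠ 0; rw [hb1]; norm_num)

lemma cut_lo {n : ℕ} {h : ℝ → ℝ} (hh : Cut h) {ε : ℝ} (hε : 0 < ε)
    {x : EuclideanSpace ℝ (Fin n)} (hx : ‖x‖ < 1) : h (ε * lr x) = 0 := by
  apply hh.lo
  have : lr x ≤ 0 := Real.log_nonpos (norm_nonneg _) hx.le
  nlinarith

lemma cut_hi {n : ℕ} {h : ℝ → ℝ} (hh : Cut h) {ε : ℝ} (hε : 0 < ε)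
    {x : EuclideanSpace ℝ (Fin n)} (hx : Real.exp (2 / ε) < ‖x‖) : h (ε * lr x) = 0 := by
  apply hh.hi
  have : 2 / ε < lr x := (Real.lt_log_iff_exp_lt ((Real.exp_pos _).trans hx)).2 hx
  rw [div_lt_iff₀ hε] at this
  linarith

/-- Smooth, compactly supported away from the origin. -/
structure Tst {n : ℕ} (F : EuclideanSpace ℝ (Fin n) → ℝ) : Prop where
  cd : ContDiff ℝ (⊤ : ℕ∞) F
  cpt : HasCompactSupport F
  off : tsupport F ⊆ {0}ᶜ

lemma tst_of {n : ℕ} {F : EuclideanSpace ℝ (Fin n) → ℝ} (hF : Sm F)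
    (h0 : ∀ x, ‖x‖ < 1 → F x = 0) {R : ℝ} (hR : ∀ x, R < ‖x‖ → F x = 0) : Tst F := by
  refine ⟨?_, ?_, ?_⟩
  · rw [contDiff_iff_contDiffAt]
    intro x
    by_cases hx : x = 0
    · subst hx
      have : F =ᶠ[nhds 0] fun _ => 0 := by
        filter_upwards [Metric.ball_mem_nhds (0 : EuclideanSpace ℝ (Fin n)) one_pos] with y hy
        exact h0 y (by simpa using hy)
      exact contDiffAt_const.congr_of_eventuallyEq this
    · exact hF x hx
  · refine HasCompactSupport.intro (isCompact_closedBall (0 : EuclideanSpace ℝ (Fin n)) R) ?_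
    intro x hx
    apply hR
    simpa using hx
  · intro x hx
    have : tsupport F ⊆ (Metric.ball (0 : EuclideanSpace ℝ (Fin n)) 1)ᶜ := by
      refine closure_minimal ?_ Metric.isOpen_ball.isClosed_compl
      intro y hy hy'
      exact hy (h0 y (by simpa using hy'))
    intro hx0
    rw [Set.mem_singleton_iff] at hx0
    subst hx0
    exact this hx (by simp)

lemma tst_cut {n : ℕ} {h : ℝ → ℝ} (hh : Cut h) {ε : ℝ} (hε : 0 < ε)
    {f : EuclideanSpace ℝ (Fin n) → ℝ} (hf : Sm f) (s : ℝ) :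
    Tst (fun y => f y * (Real.exp (-(s * lr y)) * h (ε * lr y))) := by
  refine tst_of (R := Real.exp (2 / ε)) ?_ ?_ ?_
  · intro x hx
    refine (hf x hx).mul (((contDiffAt_const.mul (cda_lr hx)).neg.exp).mul ?_)
    exact hh.cd.contDiffAt.comp x (contDiffAt_const.mul (cda_lr hx))
  · intro x hx
    rw [cut_lo hh hε hx]; simp
  · intro x hx
    rw [cut_hi hh hε hx]; simp

lemma Tst.zero_nhds {n : ℕ} {G : EuclideanSpace ℝ (Fin n) → ℝ} (hG : Tst G) :
    G =ᶠ[nhds 0] 0 := by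
  rw [← notMem_tsupport_iff_eventuallyEq]
  intro h
  exact hG.off h rfl

lemma Tst.integ {n : ℕ} {G q : EuclideanSpace ℝ (Fin n) → ℝ} (hG : Tst G)
    (hq : ∀ x, x ≠ 0 → ContinuousAt q x) : Integrable (fun x => G x * q x) := by
  have hc : Continuous (fun x => G x * q x) := by
    rw [continuous_iff_continuousAt]
    intro x
    by_cases hx : x = 0
    · subst hx
      have : (fun x => G x * q x) =ᶠ[nhds 0] fun _ => 0 := by
        filter_upwards [hG.zero_nhds] with y hy
        rw [hy]; simp
      exact continuousAt_const.congr this.symm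
    · exact (hG.cd.continuous.continuousAt).mul (hq x hx)
  exact hc.integrable_of_hasCompactSupport hG.cpt.mul_right

lemma Tst.pd {n : ℕ} {G : EuclideanSpace ℝ (Fin n) → ℝ} (hG : Tst G) (i : Fin n) :
    Tst (pd i G) := by
  refine ⟨?_, ?_, ?_⟩
  · rw [contDiff_iff_contDiffAt]
    exact fun x => cda_pd hG.cd.contDiffAt i
  · exact hG.cpt.fderiv_apply (𝕜 := ℝ) _
  · refine (closure_minimal ?_ (isClosed_tsupport G)).trans hG.off
    intro x hx
    apply support_fderiv_subset ℝ (f := G)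
    intro h0
    apply hx
    simp [_root_.pd, h0]

lemma ibp {n : ℕ} {G f : EuclideanSpace ℝ (Fin n) → ℝ} (hG : Tst G) (hf : Sm f) :
    ∫ x, G x * laplacian f x = - ∫ x, ∑ i, pd i G x * pd i f x := by
  have h1 : ∀ x, G x * laplacian f x = ∑ i, G x * pd i (pd i f) x := by
    intro x
    by_cases hx : x = 0
    · subst hx
      rw [hG.zero_nhds.eq_of_nhds]; simp
    · rw [lap_eq (hf x hx), Finset.mul_sum]
  simp only [h1]
  have i1 : ∀ i, Integrable (fun x => G x * pd i (pd i f) x) := fun i =>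
    hG.integ fun x hx => (cda_pd (cda_pd (hf x hx) i) i).continuousAt
  have i2 : ∀ i, Integrable (fun x => pd i G x * pd i f x) := fun i =>
    (hG.pd i).integ fun x hx => ((cda_pd (hf x hx) i)).continuousAt
  have i3 : ∀ i, Integrable (fun x => G x * pd i f x) := fun i =>
    hG.integ fun x hx => ((cda_pd (hf x hx) i)).continuousAt
  rw [integral_finsetSum _ fun i _ => i1 i, integral_finsetSum _ fun i _ => i2 i,
    ← Finset.sum_neg_distrib]
  refine Finset.sum_congr rfl fun i _ => ?_
  exact integral_mul_fderiv_eq_neg_fderiv_mul_of_integrable (i2 i) (i1 i) (i3 i)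
    (fun x _ => hG.cd.differentiable (by simp) x)
    (fun x hx => cda_da (cda_pd (hf x (hG.off hx)) i))

lemma norm_grad {n : ℕ} (f : EuclideanSpace ℝ (Fin n) → ℝ) (x : EuclideanSpace ℝ (Fin n)) :
    ‖gradient f x‖ ^ 2 = ∑ i, pd i f x * pd i f x := by
  rw [EuclideanSpace.norm_sq_eq]
  refine Finset.sum_congr rfl fun i _ => ?_
  have : gradient f x i = pd i f x := by
    have h := EuclideanSpace.inner_single_right (𝕜 := ℝ) i 1 (gradient f x)
    rw [gradient, InnerProductSpace.toDual_symm_apply] at h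
    simp at h
    rw [pd, h, gradient]
  rw [this, Real.norm_eq_abs, sq_abs, pow_two]

lemma polar1 {n : ℕ} (hn : 0 < n) {f : EuclideanSpace ℝ (Fin n) → ℝ}
    (hf : ∀ c : ℝ, 0 < c → ∀ x, f (c • x) = f x) (K : ℝ → ℝ) {ε : ℝ} (hε : 0 < ε) :
    ∫ x, f x * (Real.exp (-(n * lr x)) * K (ε * lr x)) = ε⁻¹ * (Ms f * ∫ t, K t) := by
  rw [polar hn f hf (fun t => K (ε * t)), Measure.integral_comp_mul_left, abs_of_pos (inv_pos.2 hε),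
    smul_eq_mul]
  ring

lemma Ms_Dl {n : ℕ} (hn : 0 < n) {f g : EuclideanSpace ℝ (Fin n) → ℝ} (hf : Good f) (hg : Good g)
    {h : ℝ → ℝ} (hh : Cut h) :
    Ms (fun x => g x * Dl f x) * ∫ t, h t =
      - ∫ x, (Real.exp (-((n - 2) * lr x)) * h (lr x)) * ∑ i, pd i g x * pd i f x := by
  have hT := tst_cut hh one_pos hg.sm (n - 2 : ℝ)
  have h1 := ibp hT hf.sm
  have h2 := polar1 hn (f := fun x => g x * Dl f x) (hg.mul hf.Dl).hom h one_pos
  simp only [inv_one, one_mul] at h1 h2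
  rw [← h2]
  have e1 : ∀ x, g x * Dl f x * (Real.exp (-(n * lr x)) * h (lr x)) =
      g x * (Real.exp (-((n - 2 : ℝ) * lr x)) * h (lr x)) * laplacian f x := by
    intro x
    have : Real.exp (-((n - 2 : ℝ) * lr x)) = Real.exp (2 * lr x) * Real.exp (-(n * lr x)) := by
      rw [← Real.exp_add]; congr 1; ring
    rw [this, Dl]; ring
  simp only [e1]
  rw [h1]
  congr 1
  refine integral_congr_ae (Eventually.of_forall fun x => ?_)
  by_cases hx : x = 0
  · subst hx
    have : ∀ i, pd i (fun y => g y * (Real.exp (-((n - 2 : ℝ) * lr y)) * h (lr y))) 0 = 0 := by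
      intro i
      have h3 := hT.zero_nhds
      simp only [one_mul] at h3
      rw [pd_congr h3]
      simp [pd]
    simp only [this]
    have h0 := cut_lo hh one_pos (x := (0 : EuclideanSpace ℝ (Fin n))) (by simp)
    rw [one_mul] at h0
    rw [h0]; simp
  · have hH : ContDiff ℝ (⊤ : ℕ∞) (fun t => Real.exp (-((n - 2 : ℝ) * t)) * h t) :=
      (Real.contDiff_exp.comp (contDiff_const.mul contDiff_id).neg).mul hh.cd
    have e2 : ∀ i, pd i (fun y => g y * (Real.exp (-((n - 2 : ℝ) * lr y)) * h (lr y))) x =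
        pd i g x * (Real.exp (-((n - 2 : ℝ) * lr x)) * h (lr x)) +
        g x * (deriv (fun t => Real.exp (-((n - 2 : ℝ) * t)) * h t) (lr x) * (Real.exp (-2 * lr x) * x i)) := by
      intro i
      rw [← pd_H hH hx i, ← pd_mul (cda_da (hg.sm x hx)) (cda_da (cda_H hH hx))]
    simp only [e2]
    have e3 := euler hf hx
    rw [Finset.mul_sum]
    set a := g x * (deriv (fun t => Real.exp (-((n - 2 : ℝ) * t)) * h t) (lr x) * Real.exp (-2 * lr x))
    have e4 : a * ∑ i, pd i f x * x i = 0 := by rw [e3, mul_zero]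
    rw [← add_zero (∑ i, _ * (pd i g x * pd i f x)), ← e4, Finset.mul_sum, ← Finset.sum_add_distrib]
    refine Finset.sum_congr rfl fun i _ => ?_
    simp only [a]; ring

lemma Ms_symm {n : ℕ} (hn : 0 < n) {f g : EuclideanSpace ℝ (Fin n) → ℝ} (hf : Good f) (hg : Good g) :
    Ms (fun x => g x * Dl f x) = Ms (fun x => f x * Dl g x) := by
  obtain ⟨h, hh, -, hpos, -⟩ := exists_cut
  have h1 := Ms_Dl hn hf hg hh
  have h2 := Ms_Dl hn hg hf hh
  have : Ms (fun x => g x * Dl f x) * ∫ t, h t = Ms (fun x => f x * Dl g x) * ∫ t, h t := by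
    rw [h1, h2]
    simp only [mul_comm (pd _ g _)]
  exact mul_right_cancel₀ hpos.ne' this

lemma Ms_nonpos {n : ℕ} (hn : 0 < n) {f : EuclideanSpace ℝ (Fin n) → ℝ} (hf : Good f) :
    Ms (fun x => f x * Dl f x) ≤ 0 := by
  obtain ⟨h, hh, h0, hpos, -⟩ := exists_cut
  have h1 := Ms_Dl hn hf hf hh
  have h2 : 0 ≤ ∫ x, (Real.exp (-((n - 2) * lr x)) * h (lr x)) * ∑ i, pd i f x * pd i f x :=
    integral_nonneg fun x => mul_nonneg (mul_nonneg (Real.exp_pos _).le (h0 _))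
      (Finset.sum_nonneg fun i _ => mul_self_nonneg _)
  by_contra hcon
  push Not at hcon
  have := mul_pos hcon hpos
  linarith

lemma Good.cont_sphere {n : ℕ} {f : EuclideanSpace ℝ (Fin n) → ℝ} (hf : Good f) :
    Continuous (fun θ : Metric.sphere (0 : EuclideanSpace ℝ (Fin n)) 1 => f θ) := by
  rw [continuous_iff_continuousAt]
  intro θ
  have hθ : (θ : EuclideanSpace ℝ (Fin n)) ≠ 0 := ne_zero_of_mem_unit_sphere θ
  exact ContinuousAt.comp (f := Subtype.val) (hf.sm _ hθ).continuousAt continuousAt_subtype_val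

lemma Good.integ_sphere {n : ℕ} {f : EuclideanSpace ℝ (Fin n) → ℝ} (hf : Good f) :
    Integrable (fun θ : Metric.sphere (0 : EuclideanSpace ℝ (Fin n)) 1 => f θ)
      ((volume : Measure (EuclideanSpace ℝ (Fin n))).toSphere) :=
  hf.cont_sphere.integrable_of_hasCompactSupport (HasCompactSupport.of_compactSpace _)

lemma Ms_add {n : ℕ} {f g : EuclideanSpace ℝ (Fin n) → ℝ} (hf : Good f) (hg : Good g) :
    Ms (fun x => f x + g x) = Ms f + Ms g := integral_add hf.integ_sphere hg.integ_sphere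

lemma Ms_smul {n : ℕ} (f : EuclideanSpace ℝ (Fin n) → ℝ) (a : ℝ) :
    Ms (fun x => a * f x) = a * Ms f := integral_const_mul _ _

lemma Ms_congr {n : ℕ} {f g : EuclideanSpace ℝ (Fin n) → ℝ} (h : ∀ x, x ≠ 0 → f x = g x) :
    Ms f = Ms g :=
  integral_congr_ae (Eventually.of_forall fun θ => h _ (ne_zero_of_mem_unit_sphere θ))

lemma Ms_sq_nonneg {n : ℕ} (f : EuclideanSpace ℝ (Fin n) → ℝ) : 0 ≤ Ms (fun x => f x * f x) :=
  integral_nonneg fun _ => mul_self_nonneg _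

lemma Ms_sq_zero {n : ℕ} {f : EuclideanSpace ℝ (Fin n) → ℝ} (hf : Good f)
    (h : Ms (fun x => f x * f x) = 0) (x : EuclideanSpace ℝ (Fin n)) (hx : x ≠ 0) : f x = 0 := by
  have hx' : ‖x‖⁻¹ • x ∈ Metric.sphere (0 : EuclideanSpace ℝ (Fin n)) 1 := by
    simp [norm_smul, hx]
  rw [← hf.hom _ (inv_pos.2 (norm_pos_iff.2 hx)) x]
  by_contra hne
  have := (hf.mul hf).cont_sphere.integral_pos_of_hasCompactSupport_nonneg_nonzero
    (μ := (volume : Measure (EuclideanSpace ℝ (Fin n))).toSphere)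
    (HasCompactSupport.of_compactSpace _) (fun _ => mul_self_nonneg _) (x := ⟨_, hx'⟩)
    (mul_ne_zero hne hne)
  exact this.ne' h

lemma lap_add {n : ℕ} {f g : EuclideanSpace ℝ (Fin n) → ℝ} {x : EuclideanSpace ℝ (Fin n)}
    (hf : ContDiffAt ℝ (⊤ : ℕ∞) f x) (hg : ContDiffAt ℝ (⊤ : ℕ∞) g x) :
    laplacian (fun y => f y + g y) x = laplacian f x + laplacian g x := by
  unfold laplacian
  rw [← Finset.sum_add_distrib]
  refine Finset.sum_congr rfl fun i _ => ?_
  have : (fun y => f y + g y) = f + g := rfl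
  rw [this, iteratedFDeriv_add_apply (hf.of_le (by norm_cast)) (hg.of_le (by norm_cast))]
  rfl

lemma lap_smul {n : ℕ} {f : EuclideanSpace ℝ (Fin n) → ℝ} {x : EuclideanSpace ℝ (Fin n)}
    (hf : ContDiffAt ℝ (⊤ : ℕ∞) f x) (a : ℝ) :
    laplacian (fun y => a * f y) x = a * laplacian f x := by
  unfold laplacian
  rw [Finset.mul_sum]
  refine Finset.sum_congr rfl fun i _ => ?_
  have : (fun y => a * f y) = a • f := rfl
  rw [this, iteratedFDeriv_const_smul_apply (hf.of_le (by norm_cast))]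
  rfl



lemma Cut.mul {g h : ℝ → ℝ} (hg : Cut g) (hh : Cut h) : Cut (fun t => g t * h t) :=
  ⟨hg.cd.mul hh.cd, fun t ht => by rw [hg.lo t ht, zero_mul],
    fun t ht => by rw [hg.hi t ht, zero_mul]⟩

/-- One term of the expansions. -/
def term {n : ℕ} (f : EuclideanSpace ℝ (Fin n) → ℝ) (h : ℝ → ℝ) (s ε : ℝ)
    (y : EuclideanSpace ℝ (Fin n)) : ℝ := f y * (Real.exp (-(s * lr y)) * h (ε * lr y))

lemma term_zero {n : ℕ} (f : EuclideanSpace ℝ (Fin n) → ℝ) {h : ℝ → ℝ} (hh : Cut h) (s : ℝ) {ε : ℝ}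
    (hε : 0 < ε) {x : EuclideanSpace ℝ (Fin n)} (hx : ‖x‖ < 1) : term f h s ε x = 0 := by
  rw [term, cut_lo hh hε hx]; simp

lemma term_tst {n : ℕ} {f : EuclideanSpace ℝ (Fin n) → ℝ} (hf : Good f) {h : ℝ → ℝ} (hh : Cut h)
    (s : ℝ) {ε : ℝ} (hε : 0 < ε) : Tst (term f h s ε) := tst_cut hh hε hf.sm s

lemma term_int {n : ℕ} {f : EuclideanSpace ℝ (Fin n) → ℝ} (hf : Good f) {h : ℝ → ℝ} (hh : Cut h)
    (s : ℝ) {ε : ℝ} (hε : 0 < ε) : Integrable (term f h s ε) :=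
  (term_tst hf hh s hε).cd.continuous.integrable_of_hasCompactSupport (term_tst hf hh s hε).cpt

lemma Tst.add {n : ℕ} {f g : EuclideanSpace ℝ (Fin n) → ℝ} (hf : Tst f) (hg : Tst g) :
    Tst (fun x => f x + g x) := by
  refine ⟨hf.cd.add hg.cd, hf.cpt.add hg.cpt, ?_⟩
  exact (tsupport_add f g).trans (Set.union_subset hf.off hg.off)

lemma Tst.smul {n : ℕ} {f : EuclideanSpace ℝ (Fin n) → ℝ} (hf : Tst f) (a : ℝ) :
    Tst (fun x => a * f x) := by
  refine ⟨contDiff_const.mul hf.cd, hf.cpt.mul_left, ?_⟩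
  exact (tsupport_mul_subset_right (f := fun _ => a) (g := f)).trans hf.off

/-- First-order expansion coefficients. -/
def cA {n : ℕ} (w : EuclideanSpace ℝ (Fin n) → ℝ) (b : ℝ) : ℕ → EuclideanSpace ℝ (Fin n) → ℝ
  | 0 => fun x => Dl w x + (-b) * w x
  | 1 => fun x => 4 * w x
  | _ => w

lemma cA_good {n : ℕ} {w : EuclideanSpace ℝ (Fin n) → ℝ} (hw : Good w) (b : ℝ) (i : ℕ) :
    Good (cA w b i) := by
  match i with
  | 0 => exact hw.Dl.add (hw.smul _)
  | 1 => exact hw.smul _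
  | (_ + 2) => exact hw

/-- Second-order expansion coefficients. -/
def cB {n : ℕ} (f : EuclideanSpace ℝ (Fin n) → ℝ) (b : ℝ) : EuclideanSpace ℝ (Fin n) → ℝ :=
  fun x => Dl f x + (-b) * f x

lemma cB_good {n : ℕ} {w : EuclideanSpace ℝ (Fin n) → ℝ} (hw : Good w) (b : ℝ) :
    Good (cB w b) := hw.Dl.add (hw.smul _)

/-- The Laplacian of the test function. -/
def psi {n : ℕ} (w : EuclideanSpace ℝ (Fin n) → ℝ) (b : ℝ) (h : ℝ → ℝ) (s ε : ℝ) :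
    EuclideanSpace ℝ (Fin n) → ℝ :=
  fun x => ∑ i ∈ Finset.range 3, ε ^ i * term (cA w b i) (deriv^[i] h) s ε x

lemma lap_phi {n : ℕ} {w : EuclideanSpace ℝ (Fin n) → ℝ} (hw : Good w) {h : ℝ → ℝ} (hh : Cut h)
    {ε : ℝ} (hε : 0 < ε) :
    laplacian (term w h ((n - 6) / 2) ε) =
      psi w ((n - 6) * (n + 2) / 4) h ((n - 2) / 2) ε := by
  ext x
  by_cases hx : x = 0
  · subst hx
    rw [lap_congr (term_tst hw hh _ hε).zero_nhds]
    simp only [psi]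
    rw [Finset.sum_eq_zero]
    · simp [laplacian]
    · intro i _
      rw [term_zero _ (hh.iter i) _ hε (by simp), mul_zero]
  · have := lap_exp hw hh.cd ((n - 6) / 2) ε hx
    refine Eq.trans this ?_
    simp only [psi, Finset.sum_range_succ, Finset.sum_range_zero, term, cA, Function.iterate_succ,
      Function.iterate_zero, Function.comp, id]
    have e : ((n : ℝ) - 6) / 2 + 2 = (n - 2) / 2 := by ring
    rw [e]; ring

lemma psi_tst {n : ℕ} {w : EuclideanSpace ℝ (Fin n) → ℝ} (hw : Good w) {h : ℝ → ℝ} (hh : Cut h)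
    {ε : ℝ} (hε : 0 < ε) (b s : ℝ) : Tst (psi w b h s ε) := by
  have t : ∀ i, Tst (fun x => ε ^ i * term (cA w b i) (deriv^[i] h) s ε x) := fun i =>
    (term_tst (cA_good hw b i) (hh.iter i) s hε).smul _
  have : psi w b h s ε = fun x => (ε ^ 0 * term (cA w b 0) (deriv^[0] h) s ε x +
      ε ^ 1 * term (cA w b 1) (deriv^[1] h) s ε x) + ε ^ 2 * term (cA w b 2) (deriv^[2] h) s ε x := by
    ext x
    simp only [psi, Finset.sum_range_succ, Finset.sum_range_zero, zero_add]
  rw [this]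
  exact ((t 0).add (t 1)).add (t 2)

lemma lap_psi {n : ℕ} {w : EuclideanSpace ℝ (Fin n) → ℝ} (hw : Good w) {h : ℝ → ℝ} (hh : Cut h)
    {ε : ℝ} (hε : 0 < ε) (b : ℝ) {x : EuclideanSpace ℝ (Fin n)} (hx : x ≠ 0) :
    laplacian (psi w b h ((n - 2) / 2) ε) x = ∑ j ∈ Finset.range 3, ε ^ j *
      (term (cB (cA w b j) ((n - 2) ^ 2 / 4)) (deriv^[j] h) ((n + 2) / 2) ε x +
        ε ^ 2 * term (cA w b j) (deriv^[j + 2] h) ((n + 2) / 2) ε x) := by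
  have t : ∀ i, Tst (term (cA w b i) (deriv^[i] h) ((n - 2) / 2) ε) := fun i =>
    (term_tst (cA_good hw b i) (hh.iter i) _ hε)
  have l : ∀ j, laplacian (fun x => ε ^ j * term (cA w b j) (deriv^[j] h) ((n - 2) / 2) ε x) x =
      ε ^ j * (term (cB (cA w b j) ((n - 2) ^ 2 / 4)) (deriv^[j] h) ((n + 2) / 2) ε x +
        ε ^ 2 * term (cA w b j) (deriv^[j + 2] h) ((n + 2) / 2) ε x) := by
    intro j
    rw [lap_smul (t j).cd.contDiffAt]
    congr 1
    have := lap_exp (cA_good hw b j) (hh.iter j).cd ((n - 2) / 2) ε hx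
    refine Eq.trans this ?_
    have e : ((n : ℝ) - 2) / 2 + 2 = (n + 2) / 2 := by ring
    rw [e]
    simp only [term, cB, Function.iterate_succ_apply']
    ring
  have : psi w b h ((n - 2) / 2) ε = fun x => (ε ^ 0 * term (cA w b 0) (deriv^[0] h) ((n - 2) / 2) ε x +
      ε ^ 1 * term (cA w b 1) (deriv^[1] h) ((n - 2) / 2) ε x) + ε ^ 2 * term (cA w b 2) (deriv^[2] h) ((n - 2) / 2) ε x := by
    ext x
    simp only [psi, Finset.sum_range_succ, Finset.sum_range_zero, zero_add]
  rw [this, lap_add (((t 0).smul _).add ((t 1).smul _)).cd.contDiffAt ((t 2).smul _).cd.contDiffAt,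
    lap_add ((t 0).smul _).cd.contDiffAt ((t 1).smul _).cd.contDiffAt, l, l, l]
  simp only [Finset.sum_range_succ, Finset.sum_range_zero, zero_add]

lemma term_mul {n : ℕ} (f g : EuclideanSpace ℝ (Fin n) → ℝ) (h k : ℝ → ℝ) (s s' ε : ℝ)
    (x : EuclideanSpace ℝ (Fin n)) :
    term f h s ε x * term g k s' ε x = term (fun x => f x * g x) (fun t => h t * k t) (s + s') ε x := by
  have : Real.exp (-((s + s') * lr x)) = Real.exp (-(s * lr x)) * Real.exp (-(s' * lr x)) := by
    rw [← Real.exp_add]; congr 1; ring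
  simp only [term, this]; ring

lemma energy_phi {n : ℕ} (hn : 0 < n) {w : EuclideanSpace ℝ (Fin n) → ℝ} (hw : Good w) {h : ℝ → ℝ}
    (hh : Cut h) {ε : ℝ} (hε : 0 < ε) (b : ℝ) :
    ∫ x, ‖gradient (psi w b h ((n - 2) / 2) ε) x‖ ^ 2 =
    - (ε⁻¹ * ∑ i ∈ Finset.range 3, ∑ j ∈ Finset.range 3, ε ^ (i + j) *
      (Ms (fun x => cA w b i x * cB (cA w b j) ((n - 2) ^ 2 / 4) x) * (∫ t, deriv^[i] h t * deriv^[j] h t)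
       + ε ^ 2 * (Ms (fun x => cA w b i x * cA w b j x) * (∫ t, deriv^[i] h t * deriv^[j + 2] h t)))) := by
  simp only [norm_grad]
  have hT := psi_tst hw hh hε b ((n - 2) / 2)
  have h1 := ibp hT (fun x _ => hT.cd.contDiffAt)
  rw [← neg_eq_iff_eq_neg] at h1
  rw [← h1]
  congr 1
  have e1 : ∀ x, psi w b h ((n - 2) / 2) ε x * laplacian (psi w b h ((n - 2) / 2) ε) x =
      ∑ i ∈ Finset.range 3, ∑ j ∈ Finset.range 3, ε ^ (i + j) *
      (term (fun x => cA w b i x * cB (cA w b j) ((n - 2) ^ 2 / 4) x)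
          (fun t => deriv^[i] h t * deriv^[j] h t) n ε x
       + ε ^ 2 * term (fun x => cA w b i x * cA w b j x)
          (fun t => deriv^[i] h t * deriv^[j + 2] h t) n ε x) := by
    intro x
    by_cases hx : x = 0
    · subst hx
      rw [hT.zero_nhds.eq_of_nhds]
      simp only [Pi.zero_apply, zero_mul]
      symm
      refine Finset.sum_eq_zero fun i _ => Finset.sum_eq_zero fun j _ => ?_
      rw [term_zero _ ((hh.iter i).mul (hh.iter j)) _ hε (by simp),
        term_zero _ ((hh.iter i).mul (hh.iter (j + 2))) _ hε (by simp)]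
      simp
    · rw [lap_psi hw hh hε b hx]
      simp only [psi]
      rw [Finset.sum_mul_sum]
      refine Finset.sum_congr rfl fun i _ => Finset.sum_congr rfl fun j _ => ?_
      have e : (n : ℝ) = (n - 2) / 2 + (n + 2) / 2 := by ring
      conv_rhs => rw [show ∀ f g, term f g (n : ℝ) ε x = term f g ((n - 2) / 2 + (n + 2) / 2) ε x from fun f g => by rw [← e]]
      conv_rhs => rw [show ∀ f g, term f g (n : ℝ) ε x = term f g ((n - 2) / 2 + (n + 2) / 2) ε x from fun f g => by rw [← e]]
      rw [← term_mul, ← term_mul]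
      ring
  simp only [e1]
  have i1 : ∀ i j, Integrable (term (fun x => cA w b i x * cB (cA w b j) ((n - 2) ^ 2 / 4) x)
          (fun t => deriv^[i] h t * deriv^[j] h t) n ε) := fun i j =>
    term_int ((cA_good hw b i).mul (cB_good (cA_good hw b j) _)) ((hh.iter i).mul (hh.iter j)) _ hε
  have i2 : ∀ i j, Integrable (term (fun x => cA w b i x * cA w b j x)
          (fun t => deriv^[i] h t * deriv^[j + 2] h t) n ε) := fun i j =>
    term_int ((cA_good hw b i).mul (cA_good hw b j)) ((hh.iter i).mul (hh.iter (j + 2))) _ hε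
  have i3 : ∀ i j, Integrable (fun x => ε ^ (i + j) *
      (term (fun x => cA w b i x * cB (cA w b j) ((n - 2) ^ 2 / 4) x)
          (fun t => deriv^[i] h t * deriv^[j] h t) n ε x
       + ε ^ 2 * term (fun x => cA w b i x * cA w b j x)
          (fun t => deriv^[i] h t * deriv^[j + 2] h t) n ε x)) := fun i j => ((i1 i j).add ((i2 i j).const_mul (ε ^ 2))).const_mul (ε ^ (i + j))
  rw [integral_finsetSum _ fun i _ => integrable_finsetSum _ fun j _ => i3 i j, Finset.mul_sum]
  refine Finset.sum_congr rfl fun i _ => ?_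
  rw [integral_finsetSum _ fun j _ => i3 i j, Finset.mul_sum]
  refine Finset.sum_congr rfl fun j _ => ?_
  rw [integral_const_mul, integral_add (i1 i j) ((i2 i j).const_mul _), integral_const_mul]
  have p1 := polar1 hn (f := fun x => cA w b i x * cB (cA w b j) ((n - 2) ^ 2 / 4) x) ((cA_good hw b i).mul (cB_good (cA_good hw b j) ((n - 2 : ℝ) ^ 2 / 4))).hom
    (fun t => deriv^[i] h t * deriv^[j] h t) hε
  have p2 := polar1 hn (f := fun x => cA w b i x * cA w b j x) ((cA_good hw b i).mul (cA_good hw b j)).hom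
    (fun t => deriv^[i] h t * deriv^[j + 2] h t) hε
  simp only [term]
  rw [p1, p2]
  ring

lemma stab_ineq {n : ℕ} (hn : 0 < n) {w u : EuclideanSpace ℝ (Fin n) → ℝ} (hw : Good w) {p : ℝ}
    (hp : 1 < p) (huw : ∀ x, x ≠ 0 → u x = w x * Real.exp (-(6 / (p - 1) * lr x)))
    (hstab : ∀ φ : EuclideanSpace ℝ (Fin n) → ℝ, ContDiff ℝ (⊤ : ℕ∞) φ →
      HasCompactSupport φ → tsupport φ ⊆ {(0 : EuclideanSpace ℝ (Fin n))}ᶜ →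
      p * (∫ x, |u x| ^ (p - 1) * φ x ^ 2) ≤ ∫ x, ‖gradient (laplacian φ) x‖ ^ 2) :
    p * Ms (fun x => |w x| ^ (p - 1) * w x ^ 2) ≤
      - Ms (fun x => cB w ((n - 6) * (n + 2) / 4) x *
          cB (cB w ((n - 6) * (n + 2) / 4)) ((n - 2) ^ 2 / 4) x) := by
  obtain ⟨h, hh, -, -, hpos⟩ := exists_cut
  set b : ℝ := (n - 6) * (n + 2) / 4
  set c := ∫ t, h t * h t
  set N := Ms (fun x => |w x| ^ (p - 1) * w x ^ 2)
  set P : ℝ → ℝ := fun ε => ∑ i ∈ Finset.range 3, ∑ j ∈ Finset.range 3, ε ^ (i + j) *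
      (Ms (fun x => cA w b i x * cB (cA w b j) ((n - 2) ^ 2 / 4) x) * (∫ t, deriv^[i] h t * deriv^[j] h t)
       + ε ^ 2 * (Ms (fun x => cA w b i x * cA w b j x) * (∫ t, deriv^[i] h t * deriv^[j + 2] h t))) with hP
  have key : ∀ ε, 0 < ε → p * (N * c) + P ε ≤ 0 := by
    intro ε hε
    have hT := term_tst hw hh ((n - 6) / 2) hε
    have h1 := hstab _ hT.cd hT.cpt hT.off
    rw [lap_phi hw hh hε, energy_phi hn hw hh hε b] at h1
    have h2 : ∫ x, |u x| ^ (p - 1) * term w h ((n - 6) / 2) ε x ^ 2 = ε⁻¹ * (N * c) := by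
      rw [← polar1 hn (f := fun x => |w x| ^ (p - 1) * w x ^ 2)
        (fun c hc x => by rw [hw.hom c hc]) (fun t => h t * h t) hε]
      refine integral_congr_ae (Eventually.of_forall fun x => ?_)
      by_cases hx : x = 0
      · subst hx
        have := cut_lo hh hε (x := (0 : EuclideanSpace ℝ (Fin n))) (by simp)
        simp only [term, this]; simp
      · simp only [term]
        rw [huw x hx, abs_mul, abs_of_pos (Real.exp_pos _),
          Real.mul_rpow (abs_nonneg _) (Real.exp_pos _).le, ← Real.exp_mul]
        have e1 : -(6 / (p - 1) * lr x) * (p - 1) = -(6 * lr x) := by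
          have : p - 1 ≠ 0 := by linarith
          field_simp
        have e2 : Real.exp (-(n * lr x)) = Real.exp (-(6 * lr x)) *
            (Real.exp (-((n - 6) / 2 * lr x)) * Real.exp (-((n - 6) / 2 * lr x))) := by
          rw [← Real.exp_add, ← Real.exp_add]; congr 1; ring
        rw [e1, e2]; ring
    rw [h2] at h1
    change p * (ε⁻¹ * (N * c)) ≤ -(ε⁻¹ * P ε) at h1
    have h3 : ε⁻¹ * (p * (N * c) + P ε) ≤ 0 := by linarith
    by_contra hcon
    push Not at hcon
    have := mul_pos (inv_pos.2 hε) hcon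
    linarith
  have hcont : Continuous (fun ε => p * (N * c) + P ε) := by
    simp only [hP]; fun_prop
  have hlim : p * (N * c) + P 0 ≤ 0 := by
    have ht : Tendsto (fun ε => p * (N * c) + P ε) (nhdsWithin 0 (Set.Ioi 0)) (nhds (p * (N * c) + P 0)) :=
      (hcont.tendsto 0).mono_left nhdsWithin_le_nhds
    refine le_of_tendsto ht ?_
    filter_upwards [self_mem_nhdsWithin] with ε hε using key ε hε
  have hP0 : P 0 = Ms (fun x => cB w b x * cB (cB w b) ((n - 2) ^ 2 / 4) x) * c := by
    simp only [hP, Finset.sum_range_succ, Finset.sum_range_zero]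
    simp
    rfl
  rw [hP0] at hlim
  have : (p * N + Ms (fun x => cB w b x * cB (cB w b) ((n - 2) ^ 2 / 4) x)) * c ≤ 0 := by linarith
  have := nonpos_of_mul_nonpos_left this hpos
  linarith



lemma cardano_aux {n : ℝ} (hn : 15 ≤ n) :
    0 < dd0 n ∧ (dd0 n ^ 3 / 13824 + ((96 * n ^ 2 + 128) / (3 * dd0 n)) ^ 3 = -2 * dd1 n / 13824) := by
  obtain ⟨m, rfl⟩ : ∃ m, n = 15 + m := ⟨n - 15, by ring⟩
  have hm : 0 ≤ m := by linarith
  have h1 : dd1 (15 + m) < 0 := by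
    have : 0 < -dd1 (15 + m) := by
      unfold dd1; ring_nf; positivity
    linarith
  have h2 : 0 < dd2 (15 + m) := by
    unfold dd2; ring_nf; positivity
  have h3 : dd1 (15 + m) ^ 2 - 1296 * dd2 (15 + m) = 512 * (96 * (15 + m) ^ 2 + 128) ^ 3 := by
    unfold dd1 dd2; ring
  generalize 15 + m = n at *
  have hs : Real.sqrt (dd2 n) ^ 2 = dd2 n := Real.sq_sqrt h2.le
  have hs0 := Real.sqrt_nonneg (dd2 n)
  have hK : 0 < 512 * (96 * n ^ 2 + 128) ^ 3 := by positivity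
  have hD : 0 < -(dd1 n + 36 * Real.sqrt (dd2 n)) := by
    by_contra hc
    push Not at hc
    nlinarith
  have h0 : 0 < dd0 n := Real.rpow_pos_of_pos hD _
  have hc : dd0 n ^ 3 = -(dd1 n + 36 * Real.sqrt (dd2 n)) := by
    unfold dd0
    rw [← Real.rpow_natCast, ← Real.rpow_mul hD.le]; norm_num
  refine ⟨h0, ?_⟩
  have e : ((96 * n ^ 2 + 128) / (3 * dd0 n)) ^ 3 = -(dd1 n - 36 * Real.sqrt (dd2 n)) / 13824 := by
    rw [div_pow, mul_pow, hc, div_eq_div_iff (by positivity) (by norm_num)]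
    linear_combination 27 * 1296 * hs - 27 * h3
  rw [e, hc]; ring

lemma cardano {n d : ℝ} (hn : 15 ≤ n) (hd : 0 < d) (hdn : d < dfn n) :
    ∃ t0, 0 < t0 ∧ t0 < n ^ 2 / 4 - d ^ 2 ∧
      t0 ^ 3 + 8 * t0 ^ 2 - (4 * n ^ 2 - 16) * t0 = (n - 6) ^ 2 * (n + 2) ^ 2 * (n - 2) ^ 2 / 64 := by
  obtain ⟨h0, h3⟩ := cardano_aux hn
  set R := 9*n^2 + 96 - (1536 + 1152*n^2) / dd0 n - (3/2) * dd0 n with hR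
  have hdf : dfn n = (1/6) * Real.sqrt R := rfl
  have hs : 0 < Real.sqrt R := by
    rw [hdf] at hdn; linarith
  have hRp : 0 < R := Real.sqrt_pos.1 hs
  have hsq : dfn n ^ 2 = R / 36 := by
    rw [hdf, mul_pow, Real.sq_sqrt hRp.le]; ring
  set A := dd0 n / 24 with hA
  set B := (96 * n ^ 2 + 128) / (3 * dd0 n) with hB
  have hAp : 0 < A := by positivity
  have hBp : 0 < B := by positivity
  have hAB : A * B = (12 * n ^ 2 + 16) / 9 := by
    rw [hA, hB]; field_simp; ring
  have hA3 : A ^ 3 + B ^ 3 = -2 * dd1 n / 13824 := by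
    rw [← h3, hA]; ring
  have ht : n ^ 2 / 4 - dfn n ^ 2 = A + B - 8 / 3 := by
    rw [hsq, hR, hA, hB]; field_simp; ring
  refine ⟨A + B - 8 / 3, ?_, ?_, ?_⟩
  · by_contra hc
    push Not at hc
    nlinarith [sq_nonneg (A - B), mul_pos hAp hBp]
  · rw [← ht]; nlinarith
  · have hy : (A + B) ^ 3 = A ^ 3 + B ^ 3 + 3 * (A * B) * (A + B) := by ring
    rw [hA3, hAB] at hy
    generalize A + B = y at *
    unfold dd1 at hy
    linear_combination hy

/-- The key inequality: `p σ₃(a) > σ₃(b)`, in terms of `t`. -/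
lemma F_pos {n t t0 : ℝ} (ht0 : 0 < t0) (htt : t0 ≤ t) {s : ℝ} (hs : 0 < s)
    (h : s ≤ t0 ^ 3 + 8 * t0 ^ 2 - (4 * n ^ 2 - 16) * t0) :
    s + (t - t0) * s / t0 ≤ t ^ 3 + 8 * t ^ 2 - (4 * n ^ 2 - 16) * t := by
  have h1 : s / t0 ≤ t0 ^ 2 + 8 * t0 - (4 * n ^ 2 - 16) := by
    rw [div_le_iff₀ ht0]; linarith
  have h2 : s / t0 ≤ t ^ 2 + 8 * t - (4 * n ^ 2 - 16) := by nlinarith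
  have h3 := mul_le_mul_of_nonneg_left h2 (ht0.le.trans htt)
  have h4 : s + (t - t0) * s / t0 = t * (s / t0) := by field_simp; ring
  rw [h4]; linarith

lemma F_main (n : ℕ) (hn : 7 ≤ n) {p k : ℝ} (hk : 0 < k) (hk2 : k < (n - 6) / 2) (hkp : k = 6 / (p - 1)) (hp : 1 < p)
    (hpc : 15 ≤ n → p < pc n) {t : ℝ} (ht : t = (n : ℝ) ^ 2 / 4 - ((n : ℝ) / 2 - 4 - k) ^ 2) :
    ((n : ℝ) - 6) ^ 2 * (n + 2) ^ 2 * (n - 2) ^ 2 / 64 < t ^ 3 + 8 * t ^ 2 - (4 * (n : ℝ) ^ 2 - 16) * t := by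
  have hn' : (7 : ℝ) ≤ n := by exact_mod_cast hn
  set s := ((n : ℝ) - 6) ^ 2 * (n + 2) ^ 2 * (n - 2) ^ 2 / 64 with hs
  have hsp : 0 < s := by
    have : 0 < (n : ℝ) - 6 := by linarith
    have : 0 < (n : ℝ) - 2 := by linarith
    positivity
  rcases le_or_gt ((n : ℝ) / 2 - 4 - k) 1 with h1 | h1
  · have a1 : (n : ℝ) ^ 2 / 4 - 1 ≤ t := by rw [ht]; nlinarith
    have hF : s < ((n : ℝ) ^ 2 / 4 - 1) ^ 3 + 8 * ((n : ℝ) ^ 2 / 4 - 1) ^ 2 - (4 * (n : ℝ) ^ 2 - 16) * ((n : ℝ) ^ 2 / 4 - 1) := by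
      have e : ((n : ℝ) ^ 2 / 4 - 1) ^ 3 + 8 * ((n : ℝ) ^ 2 / 4 - 1) ^ 2 - (4 * (n : ℝ) ^ 2 - 16) * ((n : ℝ) ^ 2 / 4 - 1) - s
        = (n - 6) * (n + 2) ^ 2 * (n - 2) ^ 2 / 64 * 12 := by rw [hs]; ring
      have : 0 < ((n : ℝ) - 6) * (n + 2) ^ 2 * (n - 2) ^ 2 / 64 * 12 := by
        have : 0 < (n : ℝ) - 6 := by linarith
        have : 0 < (n : ℝ) - 2 := by linarith
        positivity
      linarith
    have := F_pos (by nlinarith) a1 (hsp.trans hF) le_rfl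
    have h0 : 0 ≤ (t - ((n : ℝ) ^ 2 / 4 - 1)) * (((n : ℝ) ^ 2 / 4 - 1) ^ 3 + 8 * ((n : ℝ) ^ 2 / 4 - 1) ^ 2 - (4 * (n : ℝ) ^ 2 - 16) * ((n : ℝ) ^ 2 / 4 - 1)) / ((n : ℝ) ^ 2 / 4 - 1) :=
      div_nonneg (mul_nonneg (by linarith) (hsp.trans hF).le) (by nlinarith)
    linarith
  · rcases lt_or_ge n 15 with h15 | h15
    · have a1 : 4 * (n : ℝ) - 16 < t := by rw [ht]; nlinarith
      have hF : s ≤ (4 * (n : ℝ) - 16) ^ 3 + 8 * (4 * (n : ℝ) - 16) ^ 2 - (4 * (n : ℝ) ^ 2 - 16) * (4 * (n : ℝ) - 16) := by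
        rw [hs]
        interval_cases n <;> norm_num
      have := F_pos (by linarith) a1.le hsp hF
      have h0 : 0 < (t - (4 * (n : ℝ) - 16)) * s / (4 * (n : ℝ) - 16) :=
        div_pos (mul_pos (by linarith) hsp) (by linarith)
      linarith
    · have hn15 : (15 : ℝ) ≤ n := by exact_mod_cast h15
      have hpc' := hpc h15
      have hdn : (n : ℝ) / 2 - 4 - k < dfn n := by
        by_contra hc
        push Not at hc
        unfold pc at hpc'
        have hden : 0 < (n : ℝ) - 8 - 2 * dfn n := by linarith
        rw [lt_div_iff₀ hden] at hpc'
        have : k * (p - 1) = 6 := by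
          rw [hkp]; field_simp [show p - 1 ≠ 0 by linarith]
        nlinarith
      obtain ⟨t0, q1, q2, q3⟩ := cardano hn15 (by linarith) hdn
      rw [← ht] at q2
      have := F_pos q1 q2.le hsp q3.ge
      have h0 : 0 < (t - t0) * s / t0 := div_pos (mul_pos (by linarith) hsp) q1
      linarith

lemma sigma_aux {M e p : ℝ} (he : 0 < e) (hM : e + 2 < M) (hp : 0 < p)
    (h3 : (M ^ 2 - 4) * M ^ 2 * (M ^ 2 - 4) <
      p * ((M ^ 2 - (e + 2) ^ 2) * (M ^ 2 - e ^ 2) * (M ^ 2 - (e - 2) ^ 2))) :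
    (M ^ 2 - 4) + M ^ 2 + (M ^ 2 - 4) ≤
      p * ((M ^ 2 - (e + 2) ^ 2) + (M ^ 2 - e ^ 2) + (M ^ 2 - (e - 2) ^ 2)) ∧
    (M ^ 2 - 4) * M ^ 2 + (M ^ 2 - 4) * (M ^ 2 - 4) + M ^ 2 * (M ^ 2 - 4) ≤
      p * ((M ^ 2 - (e + 2) ^ 2) * (M ^ 2 - e ^ 2) + (M ^ 2 - (e + 2) ^ 2) * (M ^ 2 - (e - 2) ^ 2) +
        (M ^ 2 - e ^ 2) * (M ^ 2 - (e - 2) ^ 2)) := by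
  have x0 : 0 < M ^ 2 - (e + 2) ^ 2 := by nlinarith
  have x1 : 0 < M ^ 2 - e ^ 2 := by nlinarith
  have x2 : 0 < M ^ 2 - (e - 2) ^ 2 := by nlinarith
  have y0 : 0 < M ^ 2 - 4 := by nlinarith
  have y1 : 0 < M ^ 2 := by nlinarith
  set a0 := M ^ 2 - (e + 2) ^ 2 with ha0
  set a1 := M ^ 2 - e ^ 2 with ha1
  set a2 := M ^ 2 - (e - 2) ^ 2 with ha2
  set b := M ^ 2 - 4 with hb
  have hB : 0 < b * M ^ 2 * b := by positivity
  -- reduce to ratio comparison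
  have red : ∀ S T : ℝ, 0 < T → (a0 * a1 * a2) * T ≤ (b * M ^ 2 * b) * S → T ≤ p * S := by
    intro S T hT h
    have h5 : (b * M ^ 2 * b) * T ≤ (p * (a0 * a1 * a2)) * T := mul_le_mul_of_nonneg_right h3.le hT.le
    have h6 : p * ((a0 * a1 * a2) * T) ≤ p * ((b * M ^ 2 * b) * S) := mul_le_mul_of_nonneg_left h hp.le
    have : (b * M ^ 2 * b) * T ≤ (b * M ^ 2 * b) * (p * S) := by linarith
    exact le_of_mul_le_mul_left this hB
  have hc : 0 < b - e ^ 2 := by nlinarith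
  have h02 : a0 * a2 = (b - e ^ 2) ^ 2 - 16 * e ^ 2 := by rw [ha0, ha2, hb]; ring
  have h02' : a0 + a2 = 2 * (b - e ^ 2) := by rw [ha0, ha2, hb]; ring
  have h02l : a0 * a2 ≤ (b - e ^ 2) ^ 2 := by rw [h02]; nlinarith
  have ha1M : a1 ≤ M ^ 2 := by nlinarith
  constructor
  · apply red _ _ (by positivity)
    have hprod : a0 * a1 * a2 ≤ (b - e ^ 2) * b * M ^ 2 := by
      calc a0 * a1 * a2 = (a0 * a2) * a1 := by ring
        _ ≤ (b - e ^ 2) ^ 2 * M ^ 2 := mul_le_mul h02l ha1M x1.le (by positivity)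
        _ ≤ (b - e ^ 2) * b * M ^ 2 := by
          apply mul_le_mul_of_nonneg_right _ y1.le
          nlinarith [mul_nonneg hc.le (sq_nonneg e)]
    have e1 : a0 + a1 + a2 = 3 * b + 4 - 3 * e ^ 2 := by rw [ha0, ha1, ha2, hb]; ring
    have e2 : b + M ^ 2 + b = 3 * b + 4 := by rw [hb]; ring
    rw [e1, e2]
    calc a0 * a1 * a2 * (3 * b + 4) ≤ (b - e ^ 2) * b * M ^ 2 * (3 * b + 4) := 
          mul_le_mul_of_nonneg_right hprod (by linarith)
      _ = (b * M ^ 2) * ((b - e ^ 2) * (3 * b + 4)) := by ring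
      _ ≤ (b * M ^ 2) * (b * (3 * b + 4 - 3 * e ^ 2)) := by
        apply mul_le_mul_of_nonneg_left _ (by positivity)
        nlinarith
      _ = _ := by ring
  · apply red _ _ (by positivity)
    have e1 : a0 * a1 + a0 * a2 + a1 * a2 = a1 * (2 * (b - e ^ 2)) + a0 * a2 := by rw [← h02']; ring
    rw [e1]
    have g1 : (a0 * a2) * (2 * b * M ^ 2) * a1 ≤ b * M ^ 2 * b * (2 * (b - e ^ 2)) * a1 := by
      apply mul_le_mul_of_nonneg_right _ x1.le
      calc (a0 * a2) * (2 * b * M ^ 2) ≤ (b - e ^ 2) ^ 2 * (2 * b * M ^ 2) :=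
            mul_le_mul_of_nonneg_right h02l (by positivity)
        _ = (2 * b * M ^ 2 * (b - e ^ 2)) * (b - e ^ 2) := by ring
        _ ≤ (2 * b * M ^ 2 * (b - e ^ 2)) * b :=
            mul_le_mul_of_nonneg_left (by nlinarith) (by positivity)
        _ = _ := by ring
    have g2 : (a0 * a2) * (b * b) * a1 ≤ (a0 * a2) * (b * b) * M ^ 2 :=
      mul_le_mul_of_nonneg_left ha1M (by positivity)
    linarith

lemma arith (n : ℕ) (hn : 7 ≤ n) {p k : ℝ} (hp1 : ((n : ℝ) + 6) / ((n : ℝ) - 6) < p)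
    (hkp : k = 6 / (p - 1)) (hpc : 15 ≤ n → p < pc n) {a0 a1 a2 b0 b1 : ℝ}
    (ha0 : a0 = k * (n - 2 - k)) (ha1 : a1 = (k + 2) * (n - 2 - (k + 2)))
    (ha2 : a2 = (k + 4) * (n - 2 - (k + 4))) (hb0 : b0 = (n - 6) * (n + 2) / 4)
    (hb1 : b1 = (n - 2) ^ 2 / 4) :
    1 < p ∧ b0 + b1 + b0 ≤ p * (a0 + a1 + a2) ∧
      b0 * b1 + b0 * b0 + b1 * b0 ≤ p * (a0 * a1 + a0 * a2 + a1 * a2) ∧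
      b0 * b1 * b0 < p * (a0 * a1 * a2) := by
  have hn' : (7 : ℝ) ≤ n := by exact_mod_cast hn
  have h6 : 0 < (n : ℝ) - 6 := by linarith
  rw [div_lt_iff₀ h6] at hp1
  have hp : 1 < p := by
    by_contra hc
    push Not at hc
    nlinarith
  have hk : 0 < k := by rw [hkp]; exact div_pos (by norm_num) (by linarith)
  have hkp' : k * (p - 1) = 6 := by
    rw [hkp]; field_simp [show p - 1 ≠ 0 by linarith]
  have hk2 : k < (n - 6) / 2 := by
    by_contra hc
    push Not at hc
    nlinarith
  have hF := F_main n hn hk hk2 hkp hp hpc rfl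
  have hpk : p * k = k + 6 := by linarith
  have h3 : b0 * b1 * b0 < p * (a0 * a1 * a2) := by
    have e1 : b0 * b1 * b0 = ((n : ℝ) - 6) ^ 2 * (n + 2) ^ 2 * (n - 2) ^ 2 / 64 := by
      rw [hb0, hb1]; ring
    have e2 : p * (a0 * a1 * a2) = (k + 6) * (n - 2 - k) * (a1 * a2) := by
      rw [ha0, ← hpk]; ring
    rw [e1, e2, ha1, ha2]
    refine lt_of_lt_of_eq hF ?_
    ring
  set e := (n : ℝ) / 2 - 3 - k with he
  set M := ((n : ℝ) - 2) / 2 with hM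
  have q0 : a0 = M ^ 2 - (e + 2) ^ 2 := by rw [ha0, he, hM]; ring
  have q1 : a1 = M ^ 2 - e ^ 2 := by rw [ha1, he, hM]; ring
  have q2 : a2 = M ^ 2 - (e - 2) ^ 2 := by rw [ha2, he, hM]; ring
  have r0 : b0 = M ^ 2 - 4 := by rw [hb0, hM]; ring
  have r1 : b1 = M ^ 2 := by rw [hb1, hM]; ring
  clear_value e M
  rw [q0, q1, q2, r0, r1] at h3 ⊢
  have := sigma_aux (M := M) (e := e) (p := p) (by linarith) (by linarith) (by linarith) h3
  exact ⟨hp, this.1, this.2, h3⟩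


lemma lap_pow {n : ℕ} {f : EuclideanSpace ℝ (Fin n) → ℝ} (hf : Good f) (s : ℝ)
    {x : EuclideanSpace ℝ (Fin n)} (hx : x ≠ 0) :
    laplacian (fun y => f y * Real.exp (-(s * lr y))) x =
      cB f (s * (n - 2 - s)) x * Real.exp (-((s + 2) * lr x)) := by
  have := lap_exp hf (h := fun _ => 1) contDiff_const s 1 hx
  simp only [mul_one, deriv_const, deriv_const', mul_zero, add_zero] at this
  rw [this, cB]; ring

lemma Dl_cB {n : ℕ} {f : EuclideanSpace ℝ (Fin n) → ℝ} (hf : Good f) (b : ℝ)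
    {x : EuclideanSpace ℝ (Fin n)} (hx : x ≠ 0) :
    Dl (cB f b) x = Dl (Dl f) x - b * Dl f x := by
  have h : laplacian (cB f b) x = laplacian (Dl f) x + (-b) * laplacian f x := by
    unfold cB
    rw [lap_add (hf.Dl.sm x hx) ((hf.smul (-b)).sm x hx), lap_smul (hf.sm x hx)]
  rw [Dl, h]; simp only [Dl]; ring

lemma Dl_congr {n : ℕ} {f g : EuclideanSpace ℝ (Fin n) → ℝ} (h : ∀ x, x ≠ 0 → f x = g x)
    {x : EuclideanSpace ℝ (Fin n)} (hx : x ≠ 0) : Dl f x = Dl g x := by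
  rw [Dl, Dl, lap_congr]
  filter_upwards [nz_nhds hx] with y hy using h y hy

lemma cB_cB {n : ℕ} {f : EuclideanSpace ℝ (Fin n) → ℝ} (hf : Good f) (b c : ℝ)
    {x : EuclideanSpace ℝ (Fin n)} (hx : x ≠ 0) :
    cB (cB f b) c x = Dl (Dl f) x - (b + c) * Dl f x + b * c * f x := by
  have := Dl_cB hf b hx
  simp only [cB] at this ⊢
  rw [this]; ring

lemma cB_cB_cB {n : ℕ} {f : EuclideanSpace ℝ (Fin n) → ℝ} (hf : Good f) (a b c : ℝ)
    {x : EuclideanSpace ℝ (Fin n)} (hx : x ≠ 0) :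
    cB (cB (cB f a) b) c x = Dl (Dl (Dl f)) x - (a + b + c) * Dl (Dl f) x
      + (a * b + a * c + b * c) * Dl f x - a * b * c * f x := by
  rw [cB_cB (cB_good hf a) b c hx, Dl_cB hf a hx, Dl_congr (fun y hy => Dl_cB hf a hy) hx]
  have h1 : Dl (fun x => Dl (Dl f) x - a * Dl f x) x = Dl (cB (Dl f) a) x := by
    congr 1; ext y; simp only [cB]; ring
  rw [h1, Dl_cB hf.Dl a hx]
  simp only [cB]; ring

lemma Ms_lin {n : ℕ} {f1 f2 f3 f4 : EuclideanSpace ℝ (Fin n) → ℝ} (h1 : Good f1) (h2 : Good f2)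
    (h3 : Good f3) (h4 : Good f4) (c1 c2 c3 c4 : ℝ) :
    Ms (fun x => c1 * f1 x + c2 * f2 x + c3 * f3 x + c4 * f4 x) =
      c1 * Ms f1 + c2 * Ms f2 + c3 * Ms f3 + c4 * Ms f4 := by
  rw [Ms_add (((h1.smul c1).add (h2.smul c2)).add (h3.smul c3)) (h4.smul c4),
    Ms_add ((h1.smul c1).add (h2.smul c2)) (h3.smul c3), Ms_add (h1.smul c1) (h2.smul c2),
    Ms_smul, Ms_smul, Ms_smul, Ms_smul]

lemma pde_sphere {n : ℕ} {w u : EuclideanSpace ℝ (Fin n) → ℝ} (hw : Good w) {p k : ℝ}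
    (hp : 1 < p) (hk : k = 6 / (p - 1))
    (huw : ∀ x, x ≠ 0 → u x = w x * Real.exp (-(k * lr x)))
    (heq : ∀ x : EuclideanSpace ℝ (Fin n), x ≠ 0 →
      laplacian (laplacian (laplacian u)) x = -(|u x| ^ (p - 1) * u x))
    {x : EuclideanSpace ℝ (Fin n)} (hx : x ≠ 0) :
    cB (cB (cB w (k * (n - 2 - k))) ((k + 2) * (n - 2 - (k + 2)))) ((k + 4) * (n - 2 - (k + 4))) x
      = -(|w x| ^ (p - 1) * w x) := by
  have l1 : ∀ y, y ≠ 0 → laplacian u y =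
      cB w (k * (n - 2 - k)) y * Real.exp (-((k + 2) * lr y)) := by
    intro y hy
    rw [← lap_pow hw k hy]
    apply lap_congr
    filter_upwards [nz_nhds hy] with z hz using huw z hz
  have l2 : ∀ y, y ≠ 0 → laplacian (laplacian u) y =
      cB (cB w (k * (n - 2 - k))) ((k + 2) * (n - 2 - (k + 2))) y * Real.exp (-((k + 4) * lr y)) := by
    intro y hy
    rw [show k + 4 = (k + 2) + 2 by ring, ← lap_pow (cB_good hw _) (k + 2) hy]
    apply lap_congr
    filter_upwards [nz_nhds hy] with z hz using l1 z hz
  have l3 := heq x hx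
  rw [lap_congr (g := fun y => cB (cB w (k * (n - 2 - k))) ((k + 2) * (n - 2 - (k + 2))) y *
    Real.exp (-((k + 4) * lr y))) (by filter_upwards [nz_nhds hx] with z hz using l2 z hz),
    lap_pow (cB_good (cB_good hw _) _) (k + 4) hx, huw x hx, abs_mul, abs_of_pos (Real.exp_pos _),
    Real.mul_rpow (abs_nonneg _) (Real.exp_pos _).le, ← Real.exp_mul] at l3
  have e1 : -(k * lr x) * (p - 1) = -(6 * lr x) := by
    have : p - 1 ≠ 0 := by linarith
    rw [hk]; field_simp
  have e2 : Real.exp (-((k + 4 + 2) * lr x)) = Real.exp (-(6 * lr x)) * Real.exp (-(k * lr x)) := by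
    rw [← Real.exp_add]; congr 1; ring
  rw [e1, e2] at l3
  have hE : Real.exp (-(6 * lr x)) * Real.exp (-(k * lr x)) ≠ 0 := by positivity
  apply mul_right_cancel₀ hE
  rw [l3]; ring

lemma good_restrict {n : ℕ} {u : EuclideanSpace ℝ (Fin n) → ℝ}
    (hu : ContDiffOn ℝ (⊤ : ℕ∞) u {(0 : EuclideanSpace ℝ (Fin n))}ᶜ) :
    Good (fun x => u (‖x‖⁻¹ • x)) := by
  constructor
  · intro x hx
    have hx' : ‖x‖⁻¹ • x ≠ 0 := smul_ne_zero (inv_ne_zero (norm_ne_zero_iff.2 hx)) hx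
    have h1 : ContDiffAt ℝ (⊤ : ℕ∞) u (‖x‖⁻¹ • x) :=
      hu.contDiffAt (isOpen_compl_singleton.mem_nhds hx')
    have h2 : ContDiffAt ℝ (⊤ : ℕ∞) (fun x : EuclideanSpace ℝ (Fin n) => ‖x‖⁻¹ • x) x :=
      ((contDiffAt_norm ℝ hx).inv (norm_ne_zero_iff.2 hx)).smul contDiffAt_id
    exact ContDiffAt.comp (g := u) (f := fun x : EuclideanSpace ℝ (Fin n) => ‖x‖⁻¹ • x) x h1 h2
  · intro c hc x
    have e : ‖c • x‖⁻¹ • c • x = ‖x‖⁻¹ • x := by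
     rw [norm_smul, Real.norm_of_nonneg hc.le, smul_smul]
     congr 1
     field_simp
    rw [e]


/-- **Theorem 4.1.** Let `n ≥ 7` and let `u` be a smooth homogeneous solution of
`(-Δ)³ u = |u|^{p-1} u` on `ℝⁿ \ {0}` (i.e. `u(x) = |x|^{-6/(p-1)} u(x/|x|)` for `x ≠ 0`)
which is stable in `ℝⁿ \ {0}`. If `(n+6)/(n-6) < p` and, in case `n ≥ 15`, additionally
`p < p_c(n)`, then `u ≡ 0` on `ℝⁿ \ {0}`. -/
theorem triharmonic_homogeneous_stable_liouville (n : ℕ) (hn : 7 ≤ n) (p : ℝ)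
    (hp1 : ((n : ℝ) + 6) / ((n : ℝ) - 6) < p) (hpc : 15 ≤ n → p < pc n)
    (u : EuclideanSpace ℝ (Fin n) → ℝ)
    (hu : ContDiffOn ℝ (⊤ : ℕ∞) u {(0 : EuclideanSpace ℝ (Fin n))}ᶜ)
    (heq : ∀ x : EuclideanSpace ℝ (Fin n), x ≠ 0 →
      laplacian (laplacian (laplacian u)) x = -(|u x| ^ (p - 1) * u x))
    (hhom : ∀ x : EuclideanSpace ℝ (Fin n), x ≠ 0 →
      u x = ‖x‖ ^ (-(6 / (p - 1))) * u (‖x‖⁻¹ • x))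
    (hstab : ∀ φ : EuclideanSpace ℝ (Fin n) → ℝ, ContDiff ℝ (⊤ : ℕ∞) φ →
      HasCompactSupport φ → tsupport φ ⊆ {(0 : EuclideanSpace ℝ (Fin n))}ᶜ →
      p * (∫ x, |u x| ^ (p - 1) * φ x ^ 2) ≤ ∫ x, ‖gradient (laplacian φ) x‖ ^ 2) :
    ∀ x : EuclideanSpace ℝ (Fin n), x ≠ 0 → u x = 0 := by
  have hw := good_restrict hu
  set w : EuclideanSpace ℝ (Fin n) → ℝ := fun x => u (‖x‖⁻¹ • x) with hwdef
  have hn0 : 0 < n := by omega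
  set k := 6 / (p - 1) with hk
  have huw : ∀ x, x ≠ 0 → u x = w x * Real.exp (-(k * lr x)) := by
    intro x hx
    rw [hhom x hx, Real.rpow_def_of_pos (norm_pos_iff.2 hx), mul_comm]
    simp only [hwdef, lr]
    congr 2
    ring
  obtain ⟨hp, c1, c2, c3⟩ := arith n hn hp1 hk hpc rfl rfl rfl rfl rfl
  have hpde := fun x (hx : x ≠ 0) => pde_sphere hw hp hk huw heq hx
  have hst := stab_ineq hn0 hw hp huw hstab
  set a0 : ℝ := k * (n - 2 - k)
  set a1 : ℝ := (k + 2) * (n - 2 - (k + 2))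
  set a2 : ℝ := (k + 4) * (n - 2 - (k + 4))
  set b0 : ℝ := (n - 6) * (n + 2) / 4
  set b1 : ℝ := (n - 2) ^ 2 / 4
  have g0 := hw.mul hw
  have g1 := hw.mul hw.Dl
  have g2 := hw.Dl.mul hw.Dl
  have g2' := hw.mul hw.Dl.Dl
  have g3 := hw.Dl.mul hw.Dl.Dl
  have g3' := hw.mul hw.Dl.Dl.Dl
  have m0 := Ms_sq_nonneg w
  have m1 := Ms_nonpos hn0 hw
  have m2 := Ms_sq_nonneg (Dl w)
  have m3 := Ms_nonpos hn0 hw.Dl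
  have s2 : Ms (fun x => w x * Dl (Dl w) x) = Ms (fun x => Dl w x * Dl w x) :=
    Ms_symm hn0 hw.Dl hw
  have s3 : Ms (fun x => w x * Dl (Dl (Dl w)) x) = Ms (fun x => Dl w x * Dl (Dl w) x) := by
    rw [Ms_symm hn0 hw.Dl.Dl hw]
    exact Ms_congr fun x _ => mul_comm _ _
  have E1 : Ms (fun x => |w x| ^ (p - 1) * w x ^ 2) =
      -Ms (fun x => Dl w x * Dl (Dl w) x) + (a0 + a1 + a2) * Ms (fun x => Dl w x * Dl w x)
        - (a0 * a1 + a0 * a2 + a1 * a2) * Ms (fun x => w x * Dl w x)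
        + a0 * a1 * a2 * Ms (fun x => w x * w x) := by
    have := Ms_lin g3' g2' g1 g0 (-1) (a0 + a1 + a2) (-(a0 * a1 + a0 * a2 + a1 * a2)) (a0 * a1 * a2)
    rw [s3, s2] at this
    rw [Ms_congr (g := fun x => (-1) * (w x * Dl (Dl (Dl w)) x) + (a0 + a1 + a2) * (w x * Dl (Dl w) x)
      + (-(a0 * a1 + a0 * a2 + a1 * a2)) * (w x * Dl w x) + a0 * a1 * a2 * (w x * w x)), this]
    · ring
    · intro x hx
      have h := hpde x hx
      rw [cB_cB_cB hw a0 a1 a2 hx] at h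
      linear_combination w x * h
  have E2 : Ms (fun x => cB w b0 x * cB (cB w b0) b1 x) =
      Ms (fun x => Dl w x * Dl (Dl w) x) - (b0 + b1 + b0) * Ms (fun x => Dl w x * Dl w x)
        + (b0 * b1 + b0 * b0 + b1 * b0) * Ms (fun x => w x * Dl w x)
        - b0 * b1 * b0 * Ms (fun x => w x * w x) := by
    have := Ms_lin (g3.add (g2'.smul (-b0))) g2 g1 g0 1 (-(b0 + b1)) (b0 * b1 + b0 * b0 + b1 * b0)
      (-(b0 * b1 * b0))
    rw [Ms_add g3 (g2'.smul (-b0)), Ms_smul, s2] at this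
    rw [Ms_congr (g := fun x => 1 * (Dl w x * Dl (Dl w) x + (-b0) * (w x * Dl (Dl w) x))
      + (-(b0 + b1)) * (Dl w x * Dl w x) + (b0 * b1 + b0 * b0 + b1 * b0) * (w x * Dl w x)
      + (-(b0 * b1 * b0)) * (w x * w x)), this]
    · ring
    · intro x hx
      rw [cB_cB hw b0 b1 hx]
      simp only [cB]; ring
  rw [E1, E2] at hst
  have hz : Ms (fun x => w x * w x) = 0 := by
    refine le_antisymm ?_ m0
    by_contra hc
    push Not at hc
    have t3 := mul_pos (sub_pos.2 c3) hc
    have t2 := mul_nonneg (sub_nonneg.2 c2) (neg_nonneg.2 m1)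
    have t1 := mul_nonneg (sub_nonneg.2 c1) m2
    have t0 := mul_nonneg (sub_nonneg.2 hp.le) (neg_nonneg.2 m3)
    linarith
  intro x hx
  rw [huw x hx, Ms_sq_zero hw hz x hx, zero_mul]
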